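/- arXiv:2309.05233 — 3 statements merged into one kernel-verified Lean document; each statement's English description precedes it below -/
import Mathlib

section
/- There exists an absolute constant C such that for all a > 0, x > 0, every φ as in the context, and every t ∈ (0, 1/12]: |φ̃(1 + 2t)| ≤ C·(a/x)^{2t} and |φ̃(1 − 2t)| ≤ C·(x/a)^{2t}. Moreover, for every t₀ ∈ (0, 1/12] there is a constant C′ = C′(t₀) such that for every k ∈ {1/2, 3/2} and every t ∈ [t₀, 1/12], |φ̂(it)| ≤ C′·((a/x)^{2t} + (x/a)^{2t}). -/
open Real MeasureTheory

/-- The J-Bessel function of complex order `ν` at real argument `u`, defined by the series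
`J_ν(u) = Σ_{j=0}^∞ ((−1)^j / (j! · Γ(j+1+ν))) · (u/2)^{2j+ν}`, where
`(u/2)^ν := exp(ν · log(u/2))` with the real logarithm. -/
noncomputable def besselJ (ν : ℂ) (u : ℝ) : ℂ :=
  ∑' j : ℕ, ((-1 : ℂ) ^ j / ((Nat.factorial j : ℂ) * Complex.Gamma ((j : ℂ) + 1 + ν))) *
    Complex.exp ((2 * (j : ℂ) + ν) * (Real.log (u / 2) : ℂ))

/-- `φ̃(β) := ∫_0^∞ J_{β−1}(u) φ(u) du/u`. -/
noncomputable def phiTilde (φ : ℝ → ℝ) (β : ℂ) : ℂ :=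
  ∫ u in Set.Ioi (0 : ℝ), besselJ (β - 1) u * (φ u : ℂ) / (u : ℂ)

/-- `φ̂(it)` for weight `k` and real `t ∈ (0, 1/4)`. -/
noncomputable def phiHatIt (k : ℝ) (φ : ℝ → ℝ) (t : ℝ) : ℂ :=
  (π : ℂ) ^ 2 * Complex.exp ((1 + (k : ℂ)) * (π : ℂ) * Complex.I / 2) *
    ((Real.cos (k * π / 2 - π * t) : ℂ) * phiTilde φ (1 - 2 * (t : ℂ)) -
      (Real.cos (k * π / 2 + π * t) : ℂ) * phiTilde φ (1 + 2 * (t : ℂ))) /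
    (Complex.I * (Real.sin (π * t) : ℂ) * (Real.cos (2 * π * t) : ℂ) *
      Complex.Gamma (1 / 2 - (k : ℂ) / 2 - (t : ℂ)) *
      Complex.Gamma (1 / 2 - (k : ℂ) / 2 + (t : ℂ)))

lemma real_beta_aux {α β : ℝ} (hα : 0 < α) (hβ : 0 < β) :
    IntegrableOn (fun x : ℝ => x ^ (α - 1) * (1 - x) ^ (β - 1)) (Set.Ioc 0 1) ∧
    ∫ x in Set.Ioc (0:ℝ) 1, x ^ (α - 1) * (1 - x) ^ (β - 1)
      = Real.Gamma α * Real.Gamma β / Real.Gamma (α + β) := by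
  have h1 := Complex.betaIntegral_convergent (u := α) (v := β) (by simpa) (by simpa)
  have h2 := Complex.Gamma_mul_Gamma_eq_betaIntegral (s := α) (t := β) (by simpa) (by simpa)
  have hc : Set.EqOn (fun x : ℝ => (x : ℂ) ^ ((α:ℂ) - 1) * (1 - (x : ℂ)) ^ ((β:ℂ) - 1))
      (fun x : ℝ => ((x ^ (α - 1) * (1 - x) ^ (β - 1) : ℝ) : ℂ)) (Set.Ioc 0 1) := by
    intro x hx
    simp only
    rw [Complex.ofReal_mul, Complex.ofReal_cpow hx.1.le, Complex.ofReal_cpow (by linarith [hx.2])]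
    push_cast
    rfl
  rw [intervalIntegrable_iff_integrableOn_Ioc_of_le zero_le_one,
    integrableOn_congr_fun hc measurableSet_Ioc] at h1
  rw [Complex.betaIntegral, intervalIntegral.integral_of_le zero_le_one,
    setIntegral_congr_fun measurableSet_Ioc hc, integral_complex_ofReal,
    ← Complex.ofReal_add, Complex.Gamma_ofReal, Complex.Gamma_ofReal, Complex.Gamma_ofReal] at h2
  refine ⟨?_, ?_⟩
  · have := h1.re
    simpa using! this
  · have h3 : Real.Gamma α * Real.Gamma β = Real.Gamma (α + β) *
      ∫ x in Set.Ioc (0:ℝ) 1, x ^ (α - 1) * (1 - x) ^ (β - 1) := by exact_mod_cast h2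
    rw [h3, mul_div_cancel_left₀ _ (Real.Gamma_pos_of_pos (by positivity)).ne']

lemma gamma_half_aux (j : ℕ) :
    Real.Gamma (j + 1 / 2) * 4 ^ j * (j.factorial : ℝ) = ((2 * j).factorial : ℝ) * √π := by
  induction j with
  | zero =>
    have h := Real.Gamma_one_half_eq
    norm_num at h ⊢
    exact h
  | succ j ih =>
    have h : ((j + 1 : ℕ) : ℝ) + 1 / 2 = (j + 1 / 2 : ℝ) + 1 := by push_cast; ring
    rw [h, Real.Gamma_add_one (by positivity), show 2 * (j + 1) = (2 * j + 1) + 1 by ring,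
      Nat.factorial_succ, Nat.factorial_succ, Nat.factorial_succ]
    push_cast
    linear_combination (2 * (2 * (j:ℝ) + 1) * (j + 1)) * ih

lemma poisson_aux {ν u : ℝ} (hν : -(1 / 2) < ν) (hu : 0 < u) :
    ∃ S : ℝ, HasSum (fun j : ℕ => (-1 : ℝ) ^ j / ((j.factorial : ℝ) * Real.Gamma (j + 1 + ν))
      * (u / 2) ^ (2 * j)) S ∧ |S| ≤ 1 / Real.Gamma (1 + ν) := by
  set w : ℝ → ℝ := fun v => v ^ ((1 / 2 : ℝ) - 1) * (1 - v) ^ ((ν + 1 / 2) - 1) with hw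
  have hν' : 0 < ν + 1 / 2 := by linarith
  obtain ⟨hwi, hwe⟩ := real_beta_aux (α := 1 / 2) (by norm_num) hν'
  have hw0 : ∀ v ∈ Set.Ioc (0:ℝ) 1, 0 ≤ w v := fun v hv =>
    mul_nonneg (rpow_nonneg hv.1.le _) (rpow_nonneg (by linarith [hv.2]) _)
  set F : ℕ → ℝ → ℝ := fun j v => w v * ((-1) ^ j * (u * √v) ^ (2 * j) / ((2 * j).factorial : ℝ)) with hF
  have hsum : HasSum (fun j => ∫ v in Set.Ioc (0:ℝ) 1, F j v)
      (∫ v in Set.Ioc (0:ℝ) 1, w v * Real.cos (u * √v)) := by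
    apply hasSum_integral_of_dominated_convergence
      (bound := fun j v => w v * (u ^ (2 * j) / ((2 * j).factorial : ℝ)))
    · intro j
      apply Measurable.aestronglyMeasurable
      fun_prop
    · intro j
      filter_upwards [ae_restrict_mem measurableSet_Ioc] with v hv
      simp only [hF, norm_mul, norm_div, norm_pow, norm_neg, norm_one, one_pow, one_mul]
      rw [Real.norm_of_nonneg (hw0 v hv), Real.norm_of_nonneg hu.le,
        Real.norm_of_nonneg (Real.sqrt_nonneg v), Real.norm_of_nonneg (by positivity)]
      have : √v ≤ 1 := Real.sqrt_le_one.2 hv.2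
      have h2 : u * √v ≤ u := by nlinarith
      have := hw0 v hv
      gcongr
    · exact ae_of_all _ fun v => (Real.hasSum_cosh u).summable.mul_left _
    · simp_rw [tsum_mul_left]
      exact hwi.mul_const _
    · exact ae_of_all _ fun v => (Real.hasSum_cos _).mul_left _
  have hFj : ∀ j, ∫ v in Set.Ioc (0:ℝ) 1, F j v =
      (√π * Real.Gamma (ν + 1 / 2)) * ((-1 : ℝ) ^ j / ((j.factorial : ℝ) * Real.Gamma (j + 1 + ν))
      * (u / 2) ^ (2 * j)) := by
    intro j
    obtain ⟨-, hj⟩ := real_beta_aux (α := j + 1 / 2) (by positivity) hν'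
    have hc : Set.EqOn (F j) (fun v => ((-1) ^ j * u ^ (2 * j) / ((2 * j).factorial : ℝ)) *
        (v ^ ((j + 1 / 2 : ℝ) - 1) * (1 - v) ^ ((ν + 1 / 2) - 1))) (Set.Ioc 0 1) := by
      intro v hv
      simp only [hF, hw]
      rw [mul_pow, pow_mul √v, Real.sq_sqrt hv.1.le,
        show (j + 1 / 2 : ℝ) - 1 = j + (1 / 2 - 1) by ring, Real.rpow_add hv.1, Real.rpow_natCast]
      ring
    rw [setIntegral_congr_fun measurableSet_Ioc hc, integral_const_mul, hj]
    have hg := gamma_half_aux j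
    have hG : (j + 1 / 2 : ℝ) + (ν + 1 / 2) = j + 1 + ν := by ring
    rw [hG]
    have hp : Real.Gamma (j + 1 + ν) ≠ 0 := by
      have : (0:ℝ) ≤ j := by positivity
      exact (Real.Gamma_pos_of_pos (by linarith)).ne'
    have e : √π = Real.Gamma (j + 1 / 2) * 4 ^ j * (j.factorial : ℝ) / ((2 * j).factorial : ℝ) := by
      rw [hg]; field_simp
    rw [e, div_pow, pow_mul 2 2 j]
    norm_num
    field_simp
  have hK : 0 < √π * Real.Gamma (ν + 1 / 2) :=
    mul_pos (Real.sqrt_pos.2 Real.pi_pos) (Real.Gamma_pos_of_pos hν')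
  refine ⟨(√π * Real.Gamma (ν + 1 / 2))⁻¹ *
    (∫ v in Set.Ioc (0:ℝ) 1, w v * Real.cos (u * √v)), ?_, ?_⟩
  · have := hsum.mul_left (√π * Real.Gamma (ν + 1 / 2))⁻¹
    simp_rw [hFj] at this
    convert! this using 2 with j
    rw [inv_mul_cancel_left₀ hK.ne']
  · have hb : ‖∫ v in Set.Ioc (0:ℝ) 1, w v * Real.cos (u * √v)‖ ≤ ∫ v in Set.Ioc (0:ℝ) 1, w v := by
      apply norm_integral_le_of_norm_le hwi
      filter_upwards [ae_restrict_mem measurableSet_Ioc] with v hv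
      rw [norm_mul, Real.norm_of_nonneg (hw0 v hv)]
      exact mul_le_of_le_one_right (hw0 v hv) (Real.abs_cos_le_one _)
    rw [hwe, Real.Gamma_one_half_eq, show 1 / 2 + (ν + 1 / 2) = 1 + ν by ring] at hb
    rw [abs_mul, abs_of_pos (inv_pos.2 hK), inv_mul_le_iff₀ hK, mul_one_div]
    exact hb

lemma besselJ_bound {ν u : ℝ} (hν : -(1 / 2) < ν) (hu : 0 < u) :
    ‖besselJ (ν : ℂ) u‖ ≤ (Real.Gamma (1 + ν))⁻¹ * (u / 2) ^ ν := by
  obtain ⟨S, hS, hb⟩ := poisson_aux hν hu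
  have hu2 : 0 < u / 2 := by positivity
  have h : besselJ (ν : ℂ) u = ((S * (u / 2) ^ ν : ℝ) : ℂ) := by
    rw [besselJ]
    refine HasSum.tsum_eq ?_
    have := Complex.hasSum_ofReal.2 (hS.mul_right ((u / 2) ^ ν))
    convert! this using 2 with j
    rw [Real.rpow_def_of_pos hu2, mul_assoc, ← Real.rpow_natCast (u / 2), Real.rpow_def_of_pos hu2,
      ← Real.exp_add]
    push_cast
    rw [← Complex.Gamma_ofReal]
    push_cast
    congr 2
    ring
  rw [h, Complex.norm_real, norm_mul, Real.norm_of_nonneg (rpow_nonneg hu2.le ν), inv_eq_one_div]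
  exact mul_le_mul_of_nonneg_right hb (rpow_nonneg hu2.le ν)

lemma gamma_inv_bound : ∃ K : ℝ, 0 ≤ K ∧ ∀ ν ∈ Set.Icc (-(1/6) : ℝ) (1/6),
    (Real.Gamma (1 + ν))⁻¹ ≤ K := by
  have hc : Continuous fun ν : ℝ => (Complex.Gamma ((1 + ν : ℝ) : ℂ))⁻¹ :=
    Complex.differentiable_one_div_Gamma.continuous.comp (by fun_prop)
  obtain ⟨K, hK⟩ := (isCompact_Icc (a := (-(1/6) : ℝ)) (b := 1/6)).exists_bound_of_continuousOn
    hc.continuousOn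
  refine ⟨K, (norm_nonneg _).trans (hK 0 (by norm_num)), fun ν hν => ?_⟩
  have := hK ν hν
  rw [Complex.Gamma_ofReal, norm_inv, Complex.norm_real] at this
  rwa [Real.norm_of_nonneg (Real.Gamma_pos_of_pos (by linarith [hν.1])).le] at this

lemma phiTilde_bound {α M ν : ℝ} {φ : ℝ → ℝ} (hα : 0 < α)
    (h01 : ∀ u, 0 ≤ φ u ∧ φ u ≤ 1)
    (hs : ∀ u, u ∉ Set.Icc α (4 * α) → φ u = 0)
    (hM : ∀ u ∈ Set.Icc α (4 * α), ‖besselJ (ν : ℂ) u‖ ≤ M) :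
    ‖phiTilde φ (1 + (ν : ℂ))‖ ≤ 3 * M := by
  have hM0 : 0 ≤ M := (norm_nonneg _).trans (hM α ⟨le_rfl, by linarith⟩)
  rw [phiTilde]
  have e : ∫ u in Set.Ioi (0 : ℝ), besselJ (1 + (ν:ℂ) - 1) u * (φ u : ℂ) / (u : ℂ)
      = ∫ u in Set.Icc α (4 * α), besselJ (1 + (ν:ℂ) - 1) u * (φ u : ℂ) / (u : ℂ) := by
    refine setIntegral_eq_of_subset_of_forall_diff_eq_zero measurableSet_Ioi ?_ ?_
    · intro u hu; exact hα.trans_le hu.1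
    · intro u hu; simp [hs u hu.2]
  rw [e, add_sub_cancel_left]
  have := norm_setIntegral_le_of_norm_le_const (μ := volume) (s := Set.Icc α (4 * α))
    (f := fun u => besselJ (ν:ℂ) u * (φ u : ℂ) / (u : ℂ)) (C := M / α) (by simp) (by
      intro u hu
      have hu0 : 0 < u := hα.trans_le hu.1
      rw [norm_div, norm_mul, Complex.norm_real, Complex.norm_real, Real.norm_of_nonneg (h01 u).1,
        Real.norm_of_nonneg hu0.le]
      have h1 : ‖besselJ (ν:ℂ) u‖ * φ u ≤ M := by
        calc _ ≤ M * 1 := mul_le_mul (hM u hu) (h01 u).2 (h01 u).1 hM0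
          _ = M := mul_one M
      exact div_le_div₀ hM0 h1 hα hu.1)
  refine this.trans (le_of_eq ?_)
  rw [Real.volume_real_Icc_of_le (by linarith)]
  field_simp
  ring

lemma part_one : ∃ C : ℝ, 0 ≤ C ∧ ∀ (a x : ℝ) (φ : ℝ → ℝ) (t : ℝ), 0 < a → 0 < x →
      (∀ u, 0 ≤ φ u ∧ φ u ≤ 1) →
      (∀ u, u ∉ Set.Icc (3 * a / (8 * x)) (3 * a / (2 * x)) → φ u = 0) →
      0 < t → t ≤ 1 / 12 →
      ‖phiTilde φ (1 + 2 * (t : ℂ))‖ ≤ C * (a / x) ^ (2 * t) ∧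
      ‖phiTilde φ (1 - 2 * (t : ℂ))‖ ≤ C * (x / a) ^ (2 * t) := by
  obtain ⟨K, hK0, hK⟩ := gamma_inv_bound
  refine ⟨3 * (K * 6), by positivity, fun a x φ t ha hx h01 hs ht ht' => ?_⟩
  have hα : 0 < 3 * a / (8 * x) := by positivity
  have e4 : 3 * a / (2 * x) = 4 * (3 * a / (8 * x)) := by field_simp; norm_num
  rw [e4] at hs
  constructor
  · have := phiTilde_bound (ν := 2 * t) (M := K * 6 * (a / x) ^ (2 * t)) hα h01 hs (by
      intro u hu
      have hu0 : 0 < u := hα.trans_le hu.1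
      refine (besselJ_bound (by linarith) hu0).trans ?_
      have h1 : (u / 2) ^ (2 * t) ≤ (a / x) ^ (2 * t) := by
        apply rpow_le_rpow (by positivity) _ (by positivity)
        have h2 : 4 * (3 * a / (8 * x)) = 3 / 2 * (a / x) := by field_simp; norm_num
        have := hu.2
        have : 0 < a / x := by positivity
        linarith
      have h3 := hK (2 * t) ⟨by linarith, by linarith⟩
      have h4 : 0 ≤ (a / x) ^ (2 * t) := by positivity
      calc _ ≤ K * (a / x) ^ (2 * t) := by gcongr
        _ ≤ _ := by nlinarith [mul_nonneg hK0 h4])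
    push_cast at this
    linarith
  · have := phiTilde_bound (ν := -(2 * t)) (M := K * 6 * (x / a) ^ (2 * t)) hα h01 hs (by
      intro u hu
      have hu0 : 0 < u := hα.trans_le hu.1
      refine (besselJ_bound (by linarith) hu0).trans ?_
      have h1 : (u / 2) ^ (-(2 * t)) ≤ 6 * (x / a) ^ (2 * t) := by
        rw [rpow_neg (by positivity), ← inv_rpow (by positivity)]
        have h5 : (u / 2)⁻¹ ≤ 6 * (x / a) := by
          have h2 : 6 * (x / a) = (a / (6 * x))⁻¹ := by field_simp
          rw [h2]
          apply inv_anti₀ (by positivity)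
          have := hu.1
          have h6 : 3 * a / (8 * x) = 3 / 8 * (a / x) := by field_simp
          have h7 : a / (6 * x) = 1 / 6 * (a / x) := by field_simp
          have : 0 < a / x := by positivity
          linarith
        calc _ ≤ (6 * (x / a)) ^ (2 * t) := rpow_le_rpow (by positivity) h5 (by positivity)
          _ = 6 ^ (2 * t) * (x / a) ^ (2 * t) := mul_rpow (by norm_num) (by positivity)
          _ ≤ 6 ^ (1:ℝ) * (x / a) ^ (2 * t) := by
            gcongr
            · norm_num
            · linarith
          _ = _ := by rw [rpow_one]
      have h3 := hK (-(2 * t)) ⟨by linarith, by linarith⟩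
      calc _ ≤ K * (6 * (x / a) ^ (2 * t)) := by gcongr
        _ = _ := by ring)
    push_cast at this
    rw [← sub_eq_add_neg] at this
    linarith

lemma denom_bound (k t₀ : ℝ) (h0 : 0 < t₀) : ∃ D : ℝ, 0 ≤ D ∧ ∀ t : ℝ, t₀ ≤ t → t ≤ 1 / 12 →
    ‖(Complex.I * (Real.sin (π * t) : ℂ) * (Real.cos (2 * π * t) : ℂ) *
      Complex.Gamma (1 / 2 - (k : ℂ) / 2 - (t : ℂ)) *
      Complex.Gamma (1 / 2 - (k : ℂ) / 2 + (t : ℂ)))⁻¹‖ ≤ D := by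
  have hc1 : Continuous fun t : ℝ => (Complex.Gamma (1 / 2 - (k : ℂ) / 2 - (t : ℂ)))⁻¹ :=
    Complex.differentiable_one_div_Gamma.continuous.comp (by fun_prop)
  have hc2 : Continuous fun t : ℝ => (Complex.Gamma (1 / 2 - (k : ℂ) / 2 + (t : ℂ)))⁻¹ :=
    Complex.differentiable_one_div_Gamma.continuous.comp (by fun_prop)
  have hc3 : ContinuousOn (fun t : ℝ => (Complex.I * (Real.sin (π * t) : ℂ) *
      (Real.cos (2 * π * t) : ℂ))⁻¹) (Set.Icc t₀ (1 / 12)) := by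
    apply ContinuousOn.inv₀
    · apply Continuous.continuousOn
      exact (continuous_const.mul (Complex.continuous_ofReal.comp (by fun_prop))).mul
        (Complex.continuous_ofReal.comp (by fun_prop))
    · intro t ht
      have hp := Real.pi_pos
      have h1 : 0 < t := h0.trans_le ht.1
      have h2 := ht.2
      have hs : 0 < Real.sin (π * t) := Real.sin_pos_of_pos_of_lt_pi (by positivity) (by nlinarith)
      have hcos : 0 < Real.cos (2 * π * t) :=
        Real.cos_pos_of_mem_Ioo ⟨by nlinarith [mul_pos hp h1], by nlinarith⟩
      refine mul_ne_zero (mul_ne_zero Complex.I_ne_zero ?_) ?_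
      · exact_mod_cast hs.ne'
      · exact_mod_cast hcos.ne'
  obtain ⟨D, hD⟩ := (isCompact_Icc (a := t₀) (b := 1/12)).exists_bound_of_continuousOn
    ((hc3.mul hc1.continuousOn).mul hc2.continuousOn)
  refine ⟨|D|, abs_nonneg _, fun t h1 h2 => ?_⟩
  have := hD t ⟨h1, h2⟩
  rw [mul_inv, mul_inv]
  exact this.trans (le_abs_self D)

lemma phiHat_bound {k t A B D : ℝ} {φ : ℝ → ℝ}
    (hA : ‖phiTilde φ (1 + 2 * (t : ℂ))‖ ≤ A) (hB : ‖phiTilde φ (1 - 2 * (t : ℂ))‖ ≤ B)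
    (hD : ‖(Complex.I * (Real.sin (π * t) : ℂ) * (Real.cos (2 * π * t) : ℂ) *
      Complex.Gamma (1 / 2 - (k : ℂ) / 2 - (t : ℂ)) *
      Complex.Gamma (1 / 2 - (k : ℂ) / 2 + (t : ℂ)))⁻¹‖ ≤ D) :
    ‖phiHatIt k φ t‖ ≤ π ^ 2 * (A + B) * D := by
  have hA0 := (norm_nonneg _).trans hA
  have hB0 := (norm_nonneg _).trans hB
  rw [phiHatIt, div_eq_mul_inv, norm_mul, norm_mul, norm_mul]
  have he : ‖Complex.exp ((1 + (k : ℂ)) * (π : ℂ) * Complex.I / 2)‖ = 1 := by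
    rw [show (1 + (k : ℂ)) * (π : ℂ) * Complex.I / 2
      = (((1 + k) * π / 2 : ℝ) : ℂ) * Complex.I by push_cast; ring]
    exact Complex.norm_exp_ofReal_mul_I _
  have hp : ‖(π : ℂ) ^ 2‖ = π ^ 2 := by
    rw [norm_pow, Complex.norm_real, Real.norm_of_nonneg Real.pi_pos.le]
  rw [he, hp, mul_one]
  have aux : ∀ (θ : ℝ) (z : ℂ), ‖(Real.cos θ : ℂ) * z‖ ≤ ‖z‖ := by
    intro θ z
    rw [norm_mul, Complex.norm_real]
    exact mul_le_of_le_one_left (norm_nonneg _) (Real.abs_cos_le_one _)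
  have hn := (norm_sub_le ((Real.cos (k * π / 2 - π * t) : ℂ) * phiTilde φ (1 - 2 * (t : ℂ)))
      ((Real.cos (k * π / 2 + π * t) : ℂ) * phiTilde φ (1 + 2 * (t : ℂ)))).trans
      (add_le_add ((aux _ _).trans hB) ((aux _ _).trans hA))
  rw [add_comm B A] at hn
  exact mul_le_mul (mul_le_mul_of_nonneg_left hn (by positivity)) hD (norm_nonneg _) (by positivity)

theorem stmt3 :
    (∃ C : ℝ, ∀ (a x : ℝ) (φ : ℝ → ℝ) (t : ℝ), 0 < a → 0 < x →
      Measurable φ → (∀ u, 0 ≤ φ u ∧ φ u ≤ 1) →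
      (∀ u, u ∉ Set.Icc (3 * a / (8 * x)) (3 * a / (2 * x)) → φ u = 0) →
      0 < t → t ≤ 1 / 12 →
      ‖phiTilde φ (1 + 2 * (t : ℂ))‖ ≤ C * (a / x) ^ (2 * t) ∧
      ‖phiTilde φ (1 - 2 * (t : ℂ))‖ ≤ C * (x / a) ^ (2 * t)) ∧
    (∀ t₀ : ℝ, 0 < t₀ → t₀ ≤ 1 / 12 →
      ∃ C' : ℝ, ∀ (k a x : ℝ) (φ : ℝ → ℝ) (t : ℝ),
        (k = 1 / 2 ∨ k = 3 / 2) → 0 < a → 0 < x →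
        Measurable φ → (∀ u, 0 ≤ φ u ∧ φ u ≤ 1) →
        (∀ u, u ∉ Set.Icc (3 * a / (8 * x)) (3 * a / (2 * x)) → φ u = 0) →
        t₀ ≤ t → t ≤ 1 / 12 →
        ‖phiHatIt k φ t‖ ≤ C' * ((a / x) ^ (2 * t) + (x / a) ^ (2 * t))) := by
  obtain ⟨C, hC0, hC⟩ := part_one
  refine ⟨⟨C, fun a x φ t ha hx _ h01 hs ht ht' => hC a x φ t ha hx h01 hs ht ht'⟩, ?_⟩
  intro t₀ h0 _
  obtain ⟨D₁, hD₁0, hD₁⟩ := denom_bound (1 / 2) t₀ h0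
  obtain ⟨D₂, hD₂0, hD₂⟩ := denom_bound (3 / 2) t₀ h0
  refine ⟨π ^ 2 * C * (D₁ + D₂), fun k a x φ t hk ha hx _ h01 hs h1 h2 => ?_⟩
  obtain ⟨hA, hB⟩ := hC a x φ t ha hx h01 hs (h0.trans_le h1) h2
  have key : ‖phiHatIt k φ t‖ ≤
      π ^ 2 * (C * (a / x) ^ (2 * t) + C * (x / a) ^ (2 * t)) * (D₁ + D₂) := by
    apply phiHat_bound hA hB
    rcases hk with rfl | rfl
    · exact (hD₁ t h1 h2).trans (by linarith)
    · exact (hD₂ t h1 h2).trans (by linarith)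
  exact key.trans (le_of_eq (by ring))
end

section
/- For every δ ∈ (0, 1/2) and every t₀ ∈ (0, 1/12] there exists a constant C = C(δ, t₀) such that, under the hypotheses of the context, for every k ∈ {1/2, 3/2} and every t ∈ [t₀, 1/12] one has | φ̂(it) − ( e^{kπi/2} cos(πt) Γ(1/2 + k/2 + t) Γ(2t) / ( Γ(1/2 − k/2 + t) · 2^{2t} π^{2t} · (a/(4π))^{2t} ) ) · (2^{2t} − 1) x^{2t} / (2t) | ≤ C·( x^{2t−δ}/a^{2t} + a^{2t}/x^{2t} + 1 ). -/
open Real MeasureTheory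

lemma aux_gamma_bound : ∃ M : ℝ, 0 < M ∧ ∀ s : ℝ, 1 / 2 ≤ s → ‖(Complex.Gamma (s : ℂ))⁻¹‖ ≤ M := by
  have hc : Continuous fun s : ℝ => (Complex.Gamma (s : ℂ))⁻¹ :=
    Complex.differentiable_one_div_Gamma.continuous.comp Complex.continuous_ofReal
  obtain ⟨M, hM⟩ := (isCompact_Icc (a := (1 / 2 : ℝ)) (b := 3)).exists_bound_of_continuousOn
    hc.continuousOn
  refine ⟨max M 1, by positivity, ?_⟩
  have key : ∀ n : ℕ, ∀ s : ℝ, 1 / 2 ≤ s → s ≤ n + 3 → ‖(Complex.Gamma (s : ℂ))⁻¹‖ ≤ max M 1 := by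
    intro n
    induction n with
    | zero =>
      intro s h1 h2
      exact (hM s ⟨h1, by simpa using h2⟩).trans (le_max_left _ _)
    | succ n ih =>
      intro s h1 h2
      push_cast at h2
      by_cases h3 : s ≤ 3
      · exact (hM s ⟨h1, h3⟩).trans (le_max_left _ _)
      · push Not at h3
        have hz : ((s - 1 : ℝ) : ℂ) ≠ 0 := by
          norm_cast; linarith
        have := Complex.Gamma_add_one _ hz
        have e : ((s - 1 : ℝ) : ℂ) + 1 = (s : ℂ) := by push_cast; ring
        rw [e] at this
        rw [this, mul_inv, norm_mul]
        have h4 := ih (s - 1) (by linarith) (by linarith)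
        have h5 : ‖(((s - 1 : ℝ) : ℂ))⁻¹‖ ≤ 1 := by
          rw [norm_inv, Complex.norm_real, Real.norm_eq_abs, abs_of_pos (by linarith)]
          exact inv_le_one_of_one_le₀ (by linarith)
        calc _ ≤ 1 * ‖(Complex.Gamma ((s - 1 : ℝ) : ℂ))⁻¹‖ := by gcongr
          _ ≤ _ := by rw [one_mul]; exact h4
  intro s hs
  obtain ⟨n, hn⟩ := exists_nat_ge s
  exact key n s hs (by linarith)

noncomputable def bTerm (ν : ℝ) (j : ℕ) (u : ℝ) : ℂ :=
  ((-1 : ℂ) ^ j / ((Nat.factorial j : ℂ) * Complex.Gamma ((j : ℂ) + 1 + (ν : ℂ)))) *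
    Complex.exp ((2 * (j : ℂ) + (ν : ℂ)) * (Real.log (u / 2) : ℂ))

lemma bTerm_bound {M : ℝ} (hM : ∀ s : ℝ, 1 / 2 ≤ s → ‖(Complex.Gamma (s : ℂ))⁻¹‖ ≤ M)
    {ν u : ℝ} (hν : -(1 / 2) ≤ ν) (hu : 0 < u) (hu2 : u ≤ 2) (j : ℕ) :
    ‖bTerm ν (j + 1) u‖ ≤ (M * u) * (1 / (Nat.factorial j : ℝ)) := by
  have hg := hM ((j + 1 : ℕ) + 1 + ν) (by push_cast; linarith [(Nat.cast_nonneg j : (0:ℝ) ≤ j)])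
  have hM0 : 0 ≤ M := (norm_nonneg _).trans hg
  have he : ‖Complex.exp ((2 * ((j + 1 : ℕ) : ℂ) + (ν : ℂ)) * (Real.log (u / 2) : ℂ))‖ ≤ u := by
    have : ((2 * ((j + 1 : ℕ) : ℂ) + (ν : ℂ)) * (Real.log (u / 2) : ℂ))
        = (((2 * ((j + 1 : ℕ) : ℝ) + ν) * Real.log (u / 2) : ℝ) : ℂ) := by push_cast; ring
    rw [this, Complex.norm_exp_ofReal]
    have hl : Real.log (u / 2) ≤ 0 := Real.log_nonpos (by positivity) (by linarith)
    calc Real.exp ((2 * ((j + 1 : ℕ) : ℝ) + ν) * Real.log (u / 2))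
        ≤ Real.exp (1 * Real.log (u / 2)) := by
          apply Real.exp_le_exp.mpr
          apply mul_le_mul_of_nonpos_right _ hl
          push_cast; linarith [(Nat.cast_nonneg j : (0:ℝ) ≤ j)]
      _ = u / 2 := by rw [one_mul, Real.exp_log (by positivity)]
      _ ≤ u := by linarith
  have hf : ‖((Nat.factorial (j + 1) : ℂ))⁻¹‖ ≤ 1 / (Nat.factorial j : ℝ) := by
    rw [norm_inv, Complex.norm_natCast, one_div]
    apply inv_anti₀ (by positivity)
    exact_mod_cast Nat.factorial_le (Nat.le_succ j)
  have h1 : ‖((-1 : ℂ) ^ (j + 1))‖ = 1 := by simp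
  unfold bTerm
  have hcast : (((j + 1 : ℕ) : ℂ) + 1 + (ν : ℂ)) = (((j + 1 : ℕ) + 1 + ν : ℝ) : ℂ) := by
    push_cast; ring
  rw [hcast, div_eq_mul_inv, mul_inv, norm_mul, norm_mul, norm_mul, h1, one_mul]
  calc _ ≤ (1 / (Nat.factorial j : ℝ)) * M * u := by gcongr
    _ = _ := by ring

lemma summable_inv_fact : Summable fun j : ℕ => 1 / (Nat.factorial j : ℝ) := by
  simpa using Real.summable_pow_div_factorial 1

noncomputable def bTail (ν : ℝ) (u : ℝ) : ℂ := ∑' j : ℕ, bTerm ν (j + 1) u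

lemma bTail_bound {M : ℝ} (hM : ∀ s : ℝ, 1 / 2 ≤ s → ‖(Complex.Gamma (s : ℂ))⁻¹‖ ≤ M)
    {ν u : ℝ} (hν : -(1 / 2) ≤ ν) (hu : 0 < u) (hu2 : u ≤ 2) :
    ‖bTail ν u‖ ≤ M * (∑' j : ℕ, 1 / (Nat.factorial j : ℝ)) * u := by
  have h := tsum_of_norm_bounded ((summable_inv_fact.hasSum).mul_left (M * u))
    (fun j => bTerm_bound hM hν hu hu2 j)
  unfold bTail
  linarith

lemma besselJ_eq {M : ℝ} (hM : ∀ s : ℝ, 1 / 2 ≤ s → ‖(Complex.Gamma (s : ℂ))⁻¹‖ ≤ M)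
    {ν u : ℝ} (hν : -(1 / 2) ≤ ν) (hu : 0 < u) (hu2 : u ≤ 2) :
    besselJ (ν : ℂ) u =
      (Complex.Gamma ((1 + ν : ℝ) : ℂ))⁻¹ * (((2 : ℝ) ^ (-ν) * u ^ ν : ℝ) : ℂ) + bTail ν u := by
  have hs : Summable fun j => bTerm ν (j + 1) u :=
    Summable.of_norm_bounded (summable_inv_fact.mul_left (M * u))
      (fun j => bTerm_bound hM hν hu hu2 j)
  have hs' : Summable fun j => bTerm ν j u := (summable_nat_add_iff 1).mp hs
  have h0 : bTerm ν 0 u =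
      (Complex.Gamma ((1 + ν : ℝ) : ℂ))⁻¹ * (((2 : ℝ) ^ (-ν) * u ^ ν : ℝ) : ℂ) := by
    have e : ((2 : ℝ) ^ (-ν) * u ^ ν : ℝ) = Real.exp (ν * Real.log (u / 2)) := by
      rw [Real.rpow_def_of_pos (by norm_num), Real.rpow_def_of_pos hu, ← Real.exp_add,
        Real.log_div hu.ne' (by norm_num)]
      congr 1; ring
    rw [e]
    simp [bTerm]
  rw [← h0]
  exact hs'.tsum_eq_zero_add

lemma bTail_cont {M : ℝ} (hM : ∀ s : ℝ, 1 / 2 ≤ s → ‖(Complex.Gamma (s : ℂ))⁻¹‖ ≤ M)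
    {ν : ℝ} (hν : -(1 / 2) ≤ ν) {A B : ℝ} (hA : 0 < A) (hB : B ≤ 2) :
    ContinuousOn (bTail ν) (Set.Icc A B) := by
  have hM0 : 0 ≤ M := (norm_nonneg _).trans (hM 1 (by norm_num))
  refine continuousOn_tsum (u := fun j => (M * 2) * (1 / (Nat.factorial j : ℝ))) ?_
    (summable_inv_fact.mul_left _) ?_
  · intro j
    unfold bTerm
    refine continuousOn_const.mul ?_
    refine Complex.continuous_exp.comp_continuousOn ?_
    refine continuousOn_const.mul ?_
    refine Complex.continuous_ofReal.comp_continuousOn ?_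
    refine ContinuousOn.log (by fun_prop) ?_
    intro u hu
    have : 0 < u := hA.trans_le hu.1
    positivity
  · intro j u hu
    have : 0 < u := hA.trans_le hu.1
    refine (bTerm_bound hM hν this (hu.2.trans hB) j).trans ?_
    have : u ≤ 2 := hu.2.trans hB
    gcongr

lemma phiTilde_est {M : ℝ} (hM : ∀ s : ℝ, 1 / 2 ≤ s → ‖(Complex.Gamma (s : ℂ))⁻¹‖ ≤ M)
    {ν : ℝ} (hν : -(1 / 2) ≤ ν) {A B : ℝ} (hA : 0 < A) (hAB : A ≤ B) (hB : B ≤ 2)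
    {φ : ℝ → ℝ} (hφ : Continuous φ) (h01 : ∀ u, 0 ≤ φ u ∧ φ u ≤ 1)
    (hφA : ∀ u, u ≤ A → φ u = 0) (hφB : ∀ u, B ≤ u → φ u = 0) :
    ‖phiTilde φ (1 + (ν : ℂ)) - (Complex.Gamma ((1 + ν : ℝ) : ℂ))⁻¹ *
      (((2 : ℝ) ^ (-ν) * ∫ u in A..B, u ^ (ν - 1) * φ u : ℝ) : ℂ)‖
      ≤ M * (∑' j : ℕ, 1 / (Nat.factorial j : ℝ)) * 2 := by
  set S := ∑' j : ℕ, 1 / (Nat.factorial j : ℝ) with hS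
  have hS0 : 0 ≤ S := tsum_nonneg fun j => by positivity
  have hM0 : 0 ≤ M := (norm_nonneg _).trans (hM 1 (by norm_num))
  set G := (Complex.Gamma ((1 + ν : ℝ) : ℂ))⁻¹ with hG
  have hpos : ∀ u ∈ Set.Icc A B, 0 < u := fun u hu => hA.trans_le hu.1
  have e1 : phiTilde φ (1 + (ν : ℂ)) =
      ∫ u in A..B, besselJ (ν : ℂ) u * (φ u : ℂ) / (u : ℂ) := by
    unfold phiTilde
    rw [intervalIntegral.integral_of_le hAB, add_sub_cancel_left]
    apply setIntegral_eq_of_subset_of_forall_sdiff_eq_zero measurableSet_Ioi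
    · intro u hu; exact hA.trans hu.1
    · intro u hu
      have : φ u = 0 := by
        by_cases h : u ≤ A
        · exact hφA u h
        · apply hφB
          by_contra h'
          exact hu.2 ⟨not_le.mp h, (not_le.mp h').le⟩
      simp [this]
  have e2 : ∫ u in A..B, besselJ (ν : ℂ) u * (φ u : ℂ) / (u : ℂ) =
      ∫ u in A..B, (G * (((2 : ℝ) ^ (-ν) * (u ^ (ν - 1) * φ u) : ℝ) : ℂ)
        + bTail ν u * (φ u : ℂ) / (u : ℂ)) := by
    apply intervalIntegral.integral_congr
    intro u hu
    rw [Set.uIcc_of_le hAB] at hu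
    have hu0 := hpos u hu
    have hc : (u : ℂ) ≠ 0 := by exact_mod_cast hu0.ne'
    simp only
    rw [besselJ_eq hM hν hu0 (hu.2.trans hB), Real.rpow_sub_one hu0.ne', ← hG]
    clear_value G
    push_cast
    field_simp
  have i1 : IntervalIntegrable (fun u => G * (((2 : ℝ) ^ (-ν) * (u ^ (ν - 1) * φ u) : ℝ) : ℂ))
      volume A B := by
    apply ContinuousOn.intervalIntegrable
    rw [Set.uIcc_of_le hAB]
    refine continuousOn_const.mul (Complex.continuous_ofReal.comp_continuousOn ?_)
    refine continuousOn_const.mul (ContinuousOn.mul ?_ hφ.continuousOn)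
    exact ContinuousOn.rpow_const continuousOn_id fun u hu => Or.inl (hpos u hu).ne'
  have i2 : IntervalIntegrable (fun u => bTail ν u * (φ u : ℂ) / (u : ℂ)) volume A B := by
    apply ContinuousOn.intervalIntegrable
    rw [Set.uIcc_of_le hAB]
    refine ContinuousOn.div ((bTail_cont hM hν hA hB).mul
      (Complex.continuous_ofReal.comp hφ).continuousOn) Complex.continuous_ofReal.continuousOn ?_
    intro u hu
    exact_mod_cast (hpos u hu).ne'
  rw [e1, e2, intervalIntegral.integral_add i1 i2, intervalIntegral.integral_const_mul,
    intervalIntegral.integral_ofReal, intervalIntegral.integral_const_mul, add_sub_cancel_left]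
  have hb : ‖∫ u in A..B, bTail ν u * (φ u : ℂ) / (u : ℂ)‖ ≤ (M * S) * |B - A| := by
    apply intervalIntegral.norm_integral_le_of_norm_le_const
    intro u hu
    rw [Set.uIoc_of_le hAB] at hu
    have hu0 : 0 < u := hA.trans hu.1
    have hb := bTail_bound hM hν hu0 (hu.2.trans hB)
    rw [norm_div, norm_mul, Complex.norm_real, Complex.norm_real, Real.norm_eq_abs,
      Real.norm_eq_abs, abs_of_pos hu0, abs_of_nonneg (h01 u).1, div_le_iff₀ hu0]
    calc _ ≤ (M * S * u) * 1 := by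
          exact mul_le_mul hb (h01 u).2 (h01 u).1 (by positivity)
      _ = _ := by ring
  refine hb.trans ?_
  have : |B - A| ≤ 2 := by rw [abs_of_nonneg (by linarith)]; linarith
  gcongr

lemma int_pos_bound {t₀ t : ℝ} (ht₀ : 0 < t₀) (ht : t₀ ≤ t) (ht' : t ≤ 1 / 12)
    {A B : ℝ} (hA : 0 < A) (hAB : A ≤ B) (hB : B ≤ 2)
    {φ : ℝ → ℝ} (hφ : Continuous φ) (h01 : ∀ u, 0 ≤ φ u ∧ φ u ≤ 1) :
    |∫ u in A..B, u ^ (2 * t - 1) * φ u| ≤ 1 / t₀ := by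
  have hpos : ∀ u ∈ Set.Icc A B, 0 < u := fun u hu => hA.trans_le hu.1
  have hc : ContinuousOn (fun u : ℝ => u ^ (2 * t - 1)) (Set.uIcc A B) := by
    rw [Set.uIcc_of_le hAB]
    exact ContinuousOn.rpow_const continuousOn_id fun u hu => Or.inl (hpos u hu).ne'
  have hn : 0 ≤ ∫ u in A..B, u ^ (2 * t - 1) * φ u := by
    apply intervalIntegral.integral_nonneg hAB
    intro u hu
    have := hpos u hu
    have := (h01 u).1
    positivity
  rw [abs_of_nonneg hn]
  have h1 : ∫ u in A..B, u ^ (2 * t - 1) * φ u ≤ ∫ u in A..B, u ^ (2 * t - 1) := by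
    apply intervalIntegral.integral_mono_on hAB (hc.mul hφ.continuousOn).intervalIntegrable
      hc.intervalIntegrable
    intro u hu
    have := hpos u hu
    have h := (h01 u).2
    calc u ^ (2 * t - 1) * φ u ≤ u ^ (2 * t - 1) * 1 := by gcongr
      _ = _ := mul_one _
  refine h1.trans ?_
  rw [integral_rpow (Or.inl (by linarith))]
  have e : 2 * t - 1 + 1 = 2 * t := by ring
  rw [e]
  have h2 : B ^ (2 * t) ≤ 2 := by
    have hB0 : 0 < B := by linarith
    calc B ^ (2 * t) ≤ (2 : ℝ) ^ (2 * t) := Real.rpow_le_rpow hB0.le hB (by linarith)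
      _ ≤ (2 : ℝ) ^ (1 : ℝ) := Real.rpow_le_rpow_of_exponent_le (by norm_num) (by linarith)
      _ = 2 := by norm_num
  have h3 : 0 ≤ A ^ (2 * t) := by positivity
  calc (B ^ (2 * t) - A ^ (2 * t)) / (2 * t) ≤ 2 / (2 * t₀) := by gcongr <;> linarith
    _ = 1 / t₀ := by field_simp

lemma piece_bound {s A B : ℝ} (hs : 0 ≤ s) (hA : 0 < A) (hAB : A ≤ B)
    {φ : ℝ → ℝ} (h01 : ∀ u, 0 ≤ φ u ∧ φ u ≤ 1) :
    |∫ u in A..B, u ^ (-s - 1) * φ u| ≤ A ^ (-s) * ((B - A) / A) := by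
  have h : ‖∫ u in A..B, u ^ (-s - 1) * φ u‖ ≤ (A ^ (-s - 1)) * |B - A| := by
    apply intervalIntegral.norm_integral_le_of_norm_le_const
    intro u hu
    rw [Set.uIoc_of_le hAB] at hu
    have hu0 : 0 < u := hA.trans hu.1
    have h0 := (h01 u).1
    rw [Real.norm_eq_abs, abs_of_nonneg (by positivity)]
    calc u ^ (-s - 1) * φ u ≤ A ^ (-s - 1) * 1 := by
          exact mul_le_mul (Real.rpow_le_rpow_of_nonpos hA hu.1.le (by linarith))
            (h01 u).2 h0 (by positivity)
      _ = _ := mul_one _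
  rw [Real.norm_eq_abs, abs_of_nonneg (by linarith : 0 ≤ B - A), Real.rpow_sub_one hA.ne'] at h
  calc _ ≤ _ := h
    _ = _ := by ring

lemma main_int {t x a T : ℝ} (ht0 : 0 < t) (ht : t ≤ 1 / 12) (ha : 0 < a) (hT : 0 < T)
    (hTx : 3 * T ≤ x)
    {φ : ℝ → ℝ} (hφ : Continuous φ) (h01 : ∀ u, 0 ≤ φ u ∧ φ u ≤ 1)
    (h1 : ∀ u, a / (2 * x) ≤ u → u ≤ a / x → φ u = 1) :
    |(∫ u in (a / (2 * x + 2 * T))..(a / (x - T)), u ^ (-(2 * t) - 1) * φ u) -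
      ((2 : ℝ) ^ (2 * t) - 1) * (x ^ (2 * t) / a ^ (2 * t)) / (2 * t)|
      ≤ 6 * (T / x * (x ^ (2 * t) / a ^ (2 * t))) := by
  have hx : 0 < x := by linarith
  have hxT : 0 < x - T := by linarith
  set A := a / (2 * x + 2 * T) with hAdef
  set P := a / (2 * x) with hP
  set Q := a / x with hQ
  set B := a / (x - T) with hB
  have hA0 : 0 < A := by positivity
  have hP0 : 0 < P := by positivity
  have hQ0 : 0 < Q := by positivity
  have hB0 : 0 < B := by positivity
  have hAP : A ≤ P := by apply div_le_div_of_nonneg_left <;> linarith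
  have hPQ : P ≤ Q := by apply div_le_div_of_nonneg_left <;> linarith
  have hQB : Q ≤ B := by apply div_le_div_of_nonneg_left <;> linarith
  have hi : ∀ {c d : ℝ}, 0 < c → 0 < d →
      IntervalIntegrable (fun u => u ^ (-(2 * t) - 1) * φ u) volume c d := by
    intro c d hc hd
    apply ContinuousOn.intervalIntegrable
    refine ContinuousOn.mul ?_ hφ.continuousOn
    refine ContinuousOn.rpow_const continuousOn_id fun u hu => Or.inl ?_
    have : 0 < u := (lt_min hc hd).trans_le hu.1
    exact this.ne'
  have hsplit : ∫ u in A..B, u ^ (-(2 * t) - 1) * φ u =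
      (∫ u in A..P, u ^ (-(2 * t) - 1) * φ u) + (∫ u in P..Q, u ^ (-(2 * t) - 1) * φ u)
      + ∫ u in Q..B, u ^ (-(2 * t) - 1) * φ u := by
    rw [intervalIntegral.integral_add_adjacent_intervals (hi hA0 hP0) (hi hP0 hQ0),
      intervalIntegral.integral_add_adjacent_intervals (hi hA0 hQ0) (hi hQ0 hB0)]
  have hmid : ∫ u in P..Q, u ^ (-(2 * t) - 1) * φ u =
      ((2 : ℝ) ^ (2 * t) - 1) * (x ^ (2 * t) / a ^ (2 * t)) / (2 * t) := by
    have e : ∫ u in P..Q, u ^ (-(2 * t) - 1) * φ u = ∫ u in P..Q, u ^ (-(2 * t) - 1) := by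
      apply intervalIntegral.integral_congr
      intro u hu
      rw [Set.uIcc_of_le hPQ] at hu
      simp [h1 u hu.1 hu.2]
    rw [e, integral_rpow]
    · have e2 : -(2 * t) - 1 + 1 = -(2 * t) := by ring
      rw [e2, Real.rpow_neg hQ0.le, Real.rpow_neg hP0.le, hQ, hP, Real.div_rpow ha.le hx.le,
        Real.div_rpow ha.le (by positivity), Real.mul_rpow (by norm_num) hx.le]
      have := Real.rpow_pos_of_pos ha (2 * t)
      have := Real.rpow_pos_of_pos hx (2 * t)
      have := Real.rpow_pos_of_pos (show (0:ℝ) < 2 by norm_num) (2 * t)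
      field_simp
      ring
    · right
      refine ⟨by linarith, ?_⟩
      rw [Set.uIcc_of_le hPQ]
      intro h
      linarith [h.1]
  have b1 := piece_bound (s := 2 * t) (by linarith) hA0 hAP h01
  have b2 := piece_bound (s := 2 * t) (by linarith) hQ0 hQB h01
  set X := x ^ (2 * t) / a ^ (2 * t) with hX
  have hX0 : 0 < X := by positivity
  have hQX : Q ^ (-(2 * t)) = X := by
    rw [Real.rpow_neg hQ0.le, hQ, Real.div_rpow ha.le hx.le, inv_div]
  have hAX : A ^ (-(2 * t)) ≤ 4 * X := by
    have : Q / 4 ≤ A := by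
      rw [hQ, hAdef, div_div]
      apply div_le_div_of_nonneg_left <;> linarith
    calc A ^ (-(2 * t)) ≤ (Q / 4) ^ (-(2 * t)) :=
          Real.rpow_le_rpow_of_nonpos (by positivity) this (by linarith)
      _ = Q ^ (-(2 * t)) * 4 ^ (2 * t) := by
          rw [Real.div_rpow hQ0.le (by norm_num), Real.rpow_neg (by norm_num : (0:ℝ) ≤ 4)]
          field_simp
      _ ≤ X * 4 ^ (1 : ℝ) := by
          rw [hQX]
          gcongr
          · norm_num
          · linarith
      _ = 4 * X := by rw [Real.rpow_one]; ring
  have r1 : (P - A) / A = T / x := by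
    rw [hP, hAdef]; field_simp; ring
  have r2 : (B - Q) / Q ≤ 2 * (T / x) := by
    have : (B - Q) / Q = T / (x - T) := by
      rw [hB, hQ]; field_simp; ring
    rw [this, ← mul_div_assoc, div_le_div_iff₀ hxT hx]
    nlinarith
  rw [hsplit, hmid]
  rw [r1] at b1
  rw [hQX] at b2
  have c1 : A ^ (-(2 * t)) * (T / x) ≤ 4 * X * (T / x) := by gcongr
  have c2 : X * ((B - Q) / Q) ≤ X * (2 * (T / x)) := by gcongr
  rw [abs_le] at *
  constructor <;> nlinarith [b1.1, b1.2, b2.1, b2.2]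

noncomputable def coefD (k t : ℝ) : ℂ :=
  (π : ℂ) ^ 2 * (Real.sin (π * t) : ℂ)⁻¹ * (Real.cos (2 * π * t) : ℂ)⁻¹ *
    (Complex.Gamma (1 / 2 - (k : ℂ) / 2 - (t : ℂ)))⁻¹ *
    (Complex.Gamma (1 / 2 - (k : ℂ) / 2 + (t : ℂ)))⁻¹

lemma sin_pos' {t : ℝ} (h0 : 0 < t) (h1 : t ≤ 1 / 12) : 0 < Real.sin (π * t) := by
  apply Real.sin_pos_of_pos_of_lt_pi
  · positivity
  · nlinarith [Real.pi_pos]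

lemma cos_pos' {t : ℝ} (h0 : 0 < t) (h1 : t ≤ 1 / 12) : 0 < Real.cos (2 * π * t) := by
  have := mul_pos Real.pi_pos h0
  apply Real.cos_pos_of_mem_Ioo
  constructor <;> nlinarith [Real.pi_pos]

lemma coefD_bound {t₀ : ℝ} (ht₀ : 0 < t₀) (k : ℝ) :
    ∃ K : ℝ, ∀ t, t₀ ≤ t → t ≤ 1 / 12 → ‖coefD k t‖ ≤ K := by
  have hc : ContinuousOn (coefD k) (Set.Icc t₀ (1 / 12)) := by
    unfold coefD
    have hG := Complex.differentiable_one_div_Gamma.continuous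
    refine ContinuousOn.mul (ContinuousOn.mul (ContinuousOn.mul (ContinuousOn.mul
      continuousOn_const ?_) ?_) ?_) ?_
    · refine ContinuousOn.inv₀ (by fun_prop) ?_
      intro t ht
      exact_mod_cast (sin_pos' (ht₀.trans_le ht.1) ht.2).ne'
    · refine ContinuousOn.inv₀ (by fun_prop) ?_
      intro t ht
      exact_mod_cast (cos_pos' (ht₀.trans_le ht.1) ht.2).ne'
    · exact (hG.comp (by fun_prop : Continuous fun t : ℝ =>
        (1 / 2 - (k : ℂ) / 2 - (t : ℂ)))).continuousOn
    · exact (hG.comp (by fun_prop : Continuous fun t : ℝ =>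
        (1 / 2 - (k : ℂ) / 2 + (t : ℂ)))).continuousOn
  obtain ⟨K, hK⟩ := isCompact_Icc.exists_bound_of_continuousOn hc
  exact ⟨K, fun t h1 h2 => hK t ⟨h1, h2⟩⟩

lemma phiHat_eq (k t : ℝ) (φ : ℝ → ℝ) :
    phiHatIt k φ t = Complex.exp ((k : ℂ) * (π : ℂ) * Complex.I / 2) * coefD k t *
      ((Real.cos (k * π / 2 - π * t) : ℂ) * phiTilde φ (1 + ((-(2 * t) : ℝ) : ℂ)) -
      (Real.cos (k * π / 2 + π * t) : ℂ) * phiTilde φ (1 + ((2 * t : ℝ) : ℂ))) := by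
  have e : Complex.exp ((1 + (k : ℂ)) * (π : ℂ) * Complex.I / 2) =
      Complex.I * Complex.exp ((k : ℂ) * (π : ℂ) * Complex.I / 2) := by
    have : ((1 + (k : ℂ)) * (π : ℂ) * Complex.I / 2) =
      (π : ℂ) / 2 * Complex.I + (k : ℂ) * (π : ℂ) * Complex.I / 2 := by ring
    rw [this, Complex.exp_add, Complex.exp_pi_div_two_mul_I]
  have e1 : (1 + ((-(2 * t) : ℝ) : ℂ)) = 1 - 2 * (t : ℂ) := by push_cast; ring
  have e2 : (1 + ((2 * t : ℝ) : ℂ)) = 1 + 2 * (t : ℂ) := by push_cast; ring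
  unfold phiHatIt coefD
  rw [e, e1, e2, div_eq_mul_inv]
  simp only [mul_inv]
  have hI : Complex.I * Complex.I⁻¹ = 1 := mul_inv_cancel₀ Complex.I_ne_zero
  generalize phiTilde φ (1 - 2 * (t : ℂ)) = p1
  generalize phiTilde φ (1 + 2 * (t : ℂ)) = p2
  linear_combination ((π : ℂ) ^ 2 * Complex.exp ((k : ℂ) * (π : ℂ) * Complex.I / 2) *
    ((Real.cos (k * π / 2 - π * t) : ℂ) * p1 - (Real.cos (k * π / 2 + π * t) : ℂ) * p2) *
    ((Real.sin (π * t) : ℂ)⁻¹ * (Real.cos (2 * π * t) : ℂ)⁻¹ *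
    (Complex.Gamma (1 / 2 - (k : ℂ) / 2 - (t : ℂ)))⁻¹ *
    (Complex.Gamma (1 / 2 - (k : ℂ) / 2 + (t : ℂ)))⁻¹)) * hI

lemma main_coef {k t : ℝ} (hk : k = 1 / 2 ∨ k = 3 / 2) (h0 : 0 < t) (h1 : t ≤ 1 / 12) :
    coefD k t * ((Real.cos (k * π / 2 - π * t) : ℝ) : ℂ) *
      (Complex.Gamma ((1 + (-(2 * t)) : ℝ) : ℂ))⁻¹ =
    ((Real.cos (π * t) * Real.Gamma (1 / 2 + k / 2 + t) * Real.Gamma (2 * t) /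
      Real.Gamma (1 / 2 - k / 2 + t) : ℝ) : ℂ) := by
  have g1 : (1 / 2 - (k : ℂ) / 2 - (t : ℂ)) = ((1 / 2 - k / 2 - t : ℝ) : ℂ) := by push_cast; ring
  have g2 : (1 / 2 - (k : ℂ) / 2 + (t : ℂ)) = ((1 / 2 - k / 2 + t : ℝ) : ℂ) := by push_cast; ring
  unfold coefD
  rw [g1, g2, Complex.Gamma_ofReal, Complex.Gamma_ofReal, Complex.Gamma_ofReal]
  norm_cast
  have hs := sin_pos' h0 h1
  have hc := cos_pos' h0 h1
  have r1 := Real.Gamma_mul_Gamma_one_sub (2 * t)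
  have r2 := Real.Gamma_mul_Gamma_one_sub (1 / 2 + k / 2 + t)
  have e1 : 1 - (1 / 2 + k / 2 + t) = 1 / 2 - k / 2 - t := by ring
  have e2 : Real.sin (π * (1 / 2 + k / 2 + t)) = Real.cos (k * π / 2 + π * t) := by
    rw [← Real.sin_add_pi_div_two]; congr 1; ring
  have e3 : Real.sin (π * (2 * t)) = 2 * Real.sin (π * t) * Real.cos (π * t) := by
    rw [← Real.sin_two_mul]; congr 1; ring
  have e4 : Real.cos (2 * π * t) =
      2 * Real.cos (k * π / 2 - π * t) * Real.cos (k * π / 2 + π * t) := by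
    rw [Real.two_mul_cos_mul_cos]
    have z : Real.cos (k * π / 2 - π * t + (k * π / 2 + π * t)) = 0 := by
      rcases hk with rfl | rfl
      · rw [← Real.cos_pi_div_two]; congr 1; ring
      · rw [show (3 / 2 * π / 2 - π * t + (3 / 2 * π / 2 + π * t)) = π / 2 + π by ring,
          Real.cos_add_pi, Real.cos_pi_div_two, neg_zero]
    rw [z, add_zero, ← Real.cos_neg]; congr 1; ring
  rw [e1, e2] at r2
  rw [e3] at r1
  have hct : 0 < Real.cos (π * t) := by
    have := mul_pos Real.pi_pos h0
    apply Real.cos_pos_of_mem_Ioo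
    constructor <;> nlinarith [Real.pi_pos]
  rw [e4] at hc ⊢
  have hcm : Real.cos (k * π / 2 - π * t) ≠ 0 := fun h => by simp [h] at hc
  have hcp : Real.cos (k * π / 2 + π * t) ≠ 0 := fun h => by simp [h] at hc
  rw [← sub_eq_add_neg]
  have n1 : Real.Gamma (1 - 2 * t) ≠ 0 := fun h => by
    rw [h, mul_zero] at r1
    have : 0 < π / (2 * Real.sin (π * t) * Real.cos (π * t)) := by positivity
    linarith
  have n2 : Real.Gamma (1 / 2 - k / 2 - t) ≠ 0 := fun h => by
    rw [h, mul_zero] at r2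
    exact (div_ne_zero Real.pi_pos.ne' hcp) r2.symm
  have r1' : Real.Gamma (2 * t) =
      π / (2 * Real.sin (π * t) * Real.cos (π * t)) / Real.Gamma (1 - 2 * t) := by
    rw [eq_div_iff n1, r1]
  have r2' : Real.Gamma (1 / 2 + k / 2 + t) =
      π / Real.cos (k * π / 2 + π * t) / Real.Gamma (1 / 2 - k / 2 - t) := by
    rw [eq_div_iff n2, r2]
  rw [r1', r2', div_eq_mul_inv _ (Real.Gamma (1 / 2 - k / 2 + t))]
  have hs' := hs.ne'
  have hct' := hct.ne'
  generalize (Real.Gamma (1 / 2 - k / 2 + t))⁻¹ = g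
  clear r1' r2' r1 r2 e1 e2 e3 e4 hc
  generalize Real.cos (k * π / 2 - π * t) = c1 at *
  generalize Real.cos (k * π / 2 + π * t) = c2 at *
  generalize Real.Gamma (1 / 2 - k / 2 - t) = γ1 at *
  generalize Real.Gamma (1 - 2 * t) = γ2 at *
  field_simp

lemma fin_b1 {m M X Z : ℝ} (hm : 0 ≤ m) (hM : 0 ≤ M) (hX : 0 ≤ X) (hZ : 0 ≤ Z) :
    m * 2 + M * (2 * (6 * X)) ≤ (m * 2 + M * (2 * 6)) * (X + Z + 1) := by
  have h1 : 0 ≤ (m * 2) * (X + Z) := by positivity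
  have h2 : 0 ≤ (M * (2 * 6)) * (Z + 1) := by positivity
  linarith

lemma fin_b2 {m M q X Z : ℝ} (hm : 0 ≤ m) (hq : 0 ≤ M * q) (hX : 0 ≤ X) (hZ : 0 ≤ Z) :
    m * 2 + M * (1 * q) ≤ (m * 2 + M * q) * (X + Z + 1) := by
  have h1 : 0 ≤ (m * 2 + M * q) * (X + Z) := by positivity
  linarith

set_option maxHeartbeats 1000000 in
theorem stmt7 :
    ∀ δ t₀ : ℝ, 0 < δ → δ < 1 / 2 → 0 < t₀ → t₀ ≤ 1 / 12 →
      ∃ C : ℝ, ∀ (x a T T' : ℝ) (φ : ℝ → ℝ) (k t : ℝ),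
        (3 : ℝ) ^ (1 / δ) ≤ x → T = x ^ (1 - δ) → T' = x ^ (1 - 2 * δ) →
        0 < a → a / (x - T) ≤ 1.999 →
        ContDiff ℝ 1 φ → (∀ u, 0 ≤ φ u ∧ φ u ≤ 1) →
        (∀ u, a / (2 * x) ≤ u → u ≤ a / x → φ u = 1) →
        (∀ u, u ≤ a / (2 * x + 2 * T) → φ u = 0) →
        (∀ u, a / (x - T) ≤ u → φ u = 0) →
        (∀ u ∈ Set.Ioo (a / (2 * x + 2 * T - 2 * T')) (a / (2 * x + 2 * T')),
          deriv φ u = 2 * x * (x + T) / (a * T)) →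
        (∀ u ∈ Set.Ioo (a / (x - T')) (a / (x - T + T')),
          deriv φ u = -(x * (x - T)) / (a * T)) →
        (∀ u ∈ Set.Ioo (a / (2 * x + 2 * T)) (a / (2 * x + 2 * T - 2 * T')) ∪
            Set.Ioo (a / (2 * x + 2 * T')) (a / (2 * x)),
          0 ≤ deriv φ u ∧ deriv φ u ≤ 4 * x * (x + T) / (a * T)) →
        (∀ u ∈ Set.Ioo (a / x) (a / (x - T')) ∪ Set.Ioo (a / (x - T + T')) (a / (x - T)),
          -(2 * x * (x - T)) / (a * T) ≤ deriv φ u ∧ deriv φ u ≤ 0) →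
        (∀ u, u ∉ Set.Icc (a / (2 * x + 2 * T)) (a / (2 * x)) ∪
            Set.Icc (a / x) (a / (x - T)) → deriv φ u = 0) →
        (k = 1 / 2 ∨ k = 3 / 2) → t₀ ≤ t → t ≤ 1 / 12 →
        ‖phiHatIt k φ t -
            Complex.exp ((k : ℂ) * (π : ℂ) * Complex.I / 2) *
              Complex.ofReal (Real.cos (π * t) * Real.Gamma (1 / 2 + k / 2 + t) *
                Real.Gamma (2 * t) /
                (Real.Gamma (1 / 2 - k / 2 + t) * (2 : ℝ) ^ (2 * t) * π ^ (2 * t) *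
                  (a / (4 * π)) ^ (2 * t)) *
                (((2 : ℝ) ^ (2 * t) - 1) * x ^ (2 * t) / (2 * t)))‖ ≤
          C * (x ^ (2 * t - δ) / a ^ (2 * t) + a ^ (2 * t) / x ^ (2 * t) + 1) := by
  intro δ t₀ hδ hδ2 ht₀ _
  obtain ⟨M, hM0, hM⟩ := aux_gamma_bound
  obtain ⟨K1, hK1⟩ := coefD_bound ht₀ (1 / 2)
  obtain ⟨K2, hK2⟩ := coefD_bound ht₀ (3 / 2)
  set S := ∑' j : ℕ, 1 / (Nat.factorial j : ℝ) with hS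
  have hS0 : 0 ≤ S := tsum_nonneg fun j => by positivity
  set K := max 0 (max K1 K2) with hK
  have hK0 : 0 ≤ K := le_max_left _ _
  refine ⟨K * ((M * S * 2 + M * (2 * 6)) + (M * S * 2 + M * (1 / t₀))), ?_⟩
  intro x a T T' φ k t hx hT _ ha haxT hφ h01 hφ1 hφA hφB _ _ _ _ _ hk ht ht'
  have ht0 : 0 < t := ht₀.trans_le ht
  have hx0 : 0 < x := (by positivity : (0 : ℝ) < 3 ^ (1 / δ)).trans_le hx
  have hT0 : 0 < T := by rw [hT]; positivity
  have hTx' : T / x = x ^ (-δ) := by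
    rw [hT, div_eq_iff hx0.ne', ← Real.rpow_add_one hx0.ne']
    congr 1; ring
  have h3 : 3 ≤ x ^ δ := by
    have := Real.rpow_le_rpow (by positivity) hx hδ.le
    rwa [← Real.rpow_mul (by norm_num), one_div_mul_cancel hδ.ne', Real.rpow_one] at this
  have hTx : 3 * T ≤ x := by
    have e : T * x ^ δ = x := by
      rw [hT, ← Real.rpow_add hx0]; simp
    nlinarith
  have hxT : 0 < x - T := by linarith
  have hcoef : ‖coefD k t‖ ≤ K := by
    rcases hk with rfl | rfl
    · exact (hK1 t ht ht').trans ((le_max_left _ _).trans (le_max_right _ _))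
    · exact (hK2 t ht ht').trans ((le_max_right _ _).trans (le_max_right _ _))
  have hA : 0 < a / (2 * x + 2 * T) := by positivity
  have hAB : a / (2 * x + 2 * T) ≤ a / (x - T) := by
    apply div_le_div_of_nonneg_left <;> linarith
  have hB : a / (x - T) ≤ 2 := by norm_num at haxT; linarith
  have p1 := phiTilde_est hM (ν := -(2 * t)) (by linarith) hA hAB hB hφ.continuous h01 hφA hφB
  have p2 := phiTilde_est hM (ν := 2 * t) (by linarith) hA hAB hB hφ.continuous h01 hφA hφB
  have q1 := main_int ht0 ht' ha hT0 hTx hφ.continuous h01 hφ1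
  have q2 := int_pos_bound ht₀ ht ht' hA hAB hB hφ.continuous h01
  have hg1 := hM (1 + -(2 * t)) (by linarith)
  have hg2 := hM (1 + 2 * t) (by linarith)
  have mc := main_coef hk ht0 ht'
  rw [← hS] at p1 p2
  rw [neg_neg] at p1
  set I1 := ∫ u in (a / (2 * x + 2 * T))..(a / (x - T)), u ^ (-(2 * t) - 1) * φ u with hI1
  set I2 := ∫ u in (a / (2 * x + 2 * T))..(a / (x - T)), u ^ (2 * t - 1) * φ u with hI2
  set N := ((2 : ℝ) ^ (2 * t) - 1) * (x ^ (2 * t) / a ^ (2 * t)) / (2 * t) with hN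
  set G1 := (Complex.Gamma ((1 + -(2 * t) : ℝ) : ℂ))⁻¹ with hG1
  set G2 := (Complex.Gamma ((1 + 2 * t : ℝ) : ℂ))⁻¹ with hG2
  set E := Complex.exp ((k : ℂ) * (π : ℂ) * Complex.I / 2) with hE
  have hEn : ‖E‖ = 1 := by
    have : (k : ℂ) * (π : ℂ) * Complex.I / 2 = ((k * π / 2 : ℝ) : ℂ) * Complex.I := by
      push_cast; ring
    rw [hE, this, Complex.norm_exp_ofReal_mul_I]
  have hmain : (Real.cos (π * t) * Real.Gamma (1 / 2 + k / 2 + t) * Real.Gamma (2 * t) /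
      (Real.Gamma (1 / 2 - k / 2 + t) * (2 : ℝ) ^ (2 * t) * π ^ (2 * t) *
        (a / (4 * π)) ^ (2 * t)) * (((2 : ℝ) ^ (2 * t) - 1) * x ^ (2 * t) / (2 * t))) =
      (Real.cos (π * t) * Real.Gamma (1 / 2 + k / 2 + t) * Real.Gamma (2 * t) /
        Real.Gamma (1 / 2 - k / 2 + t)) * ((2 : ℝ) ^ (2 * t) * N) := by
    rw [hN, Real.div_rpow ha.le (by positivity), Real.mul_rpow (by norm_num) Real.pi_pos.le,
      show (4 : ℝ) = 2 * 2 by norm_num, Real.mul_rpow (by norm_num) (by norm_num)]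
    have := Real.rpow_pos_of_pos ha (2 * t)
    have := Real.rpow_pos_of_pos Real.pi_pos (2 * t)
    have := Real.rpow_pos_of_pos (show (0:ℝ) < 2 by norm_num) (2 * t)
    simp only [div_eq_mul_inv, mul_inv, inv_inv]
    generalize (Real.Gamma (1 * 2⁻¹ - k * 2⁻¹ + t))⁻¹ = g
    field_simp
  rw [hmain, Complex.ofReal_mul, ← mc, phiHat_eq]
  set c1 := Real.cos (k * π / 2 - π * t) with hc1
  set c2 := Real.cos (k * π / 2 + π * t) with hc2
  set F1 := phiTilde φ (1 + ((-(2 * t) : ℝ) : ℂ)) with hF1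
  set F2 := phiTilde φ (1 + ((2 * t : ℝ) : ℂ)) with hF2
  have hdec : E * coefD k t * ((c1 : ℂ) * F1 - (c2 : ℂ) * F2) -
      E * (coefD k t * (c1 : ℂ) * G1 * (((2 : ℝ) ^ (2 * t) * N : ℝ) : ℂ)) =
      E * coefD k t * ((c1 : ℂ) * ((F1 - G1 * (((2 : ℝ) ^ (2 * t) * I1 : ℝ) : ℂ)) +
        G1 * (((2 : ℝ) ^ (2 * t) * (I1 - N) : ℝ) : ℂ)) -
        (c2 : ℂ) * ((F2 - G2 * (((2 : ℝ) ^ (-(2 * t)) * I2 : ℝ) : ℂ)) +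
        G2 * (((2 : ℝ) ^ (-(2 * t)) * I2 : ℝ) : ℂ))) := by
    push_cast; ring
  rw [hdec]
  have w1 : (2 : ℝ) ^ (2 * t) ≤ 2 := by
    calc (2 : ℝ) ^ (2 * t) ≤ (2 : ℝ) ^ (1 : ℝ) :=
          Real.rpow_le_rpow_of_exponent_le (by norm_num) (by linarith)
      _ = 2 := by norm_num
  have w2 : (2 : ℝ) ^ (-(2 * t)) ≤ 1 :=
    Real.rpow_le_one_of_one_le_of_nonpos (by norm_num) (by linarith)
  set X := x ^ (2 * t - δ) / a ^ (2 * t) with hX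
  have hX0 : 0 < X := by positivity
  have hXe : T / x * (x ^ (2 * t) / a ^ (2 * t)) = X := by
    rw [hTx', hX, ← mul_div_assoc, ← Real.rpow_add hx0]
    congr 2; ring
  rw [hXe] at q1
  have nc1 : ‖(c1 : ℂ)‖ ≤ 1 := by
    rw [Complex.norm_real]; exact Real.abs_cos_le_one _
  have nc2 : ‖(c2 : ℂ)‖ ≤ 1 := by
    rw [Complex.norm_real]; exact Real.abs_cos_le_one _
  have u1 : ‖G1 * (((2 : ℝ) ^ (2 * t) * (I1 - N) : ℝ) : ℂ)‖ ≤ M * (2 * (6 * X)) := by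
    rw [norm_mul, Complex.norm_real, Real.norm_eq_abs, abs_mul, abs_of_pos (by positivity)]
    gcongr
  have u2 : ‖G2 * (((2 : ℝ) ^ (-(2 * t)) * I2 : ℝ) : ℂ)‖ ≤ M * (1 * (1 / t₀)) := by
    rw [norm_mul, Complex.norm_real, Real.norm_eq_abs, abs_mul, abs_of_pos (by positivity)]
    gcongr
  have v1 := (norm_add_le (F1 - G1 * (((2 : ℝ) ^ (2 * t) * I1 : ℝ) : ℂ))
    (G1 * (((2 : ℝ) ^ (2 * t) * (I1 - N) : ℝ) : ℂ))).trans (add_le_add p1 u1)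
  have v2 := (norm_add_le (F2 - G2 * (((2 : ℝ) ^ (-(2 * t)) * I2 : ℝ) : ℂ))
    (G2 * (((2 : ℝ) ^ (-(2 * t)) * I2 : ℝ) : ℂ))).trans (add_le_add p2 u2)
  set Y1 := (F1 - G1 * (((2 : ℝ) ^ (2 * t) * I1 : ℝ) : ℂ)) +
        G1 * (((2 : ℝ) ^ (2 * t) * (I1 - N) : ℝ) : ℂ)
  set Y2 := (F2 - G2 * (((2 : ℝ) ^ (-(2 * t)) * I2 : ℝ) : ℂ)) +
        G2 * (((2 : ℝ) ^ (-(2 * t)) * I2 : ℝ) : ℂ)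
  have hZ : 0 < a ^ (2 * t) / x ^ (2 * t) := by positivity
  set Z := a ^ (2 * t) / x ^ (2 * t)
  have y1 : ‖(c1 : ℂ) * Y1‖ ≤ M * S * 2 + M * (2 * (6 * X)) := by
    rw [norm_mul]
    calc _ ≤ 1 * ‖Y1‖ := by gcongr
      _ ≤ _ := by rw [one_mul]; exact v1
  have y2 : ‖(c2 : ℂ) * Y2‖ ≤ M * S * 2 + M * (1 * (1 / t₀)) := by
    rw [norm_mul]
    calc _ ≤ 1 * ‖Y2‖ := by gcongr
      _ ≤ _ := by rw [one_mul]; exact v2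
  have hMS : 0 ≤ M * S := by positivity
  have hMt : 0 ≤ M * (1 / t₀) := by positivity
  have b1 : M * S * 2 + M * (2 * (6 * X)) ≤ (M * S * 2 + M * (2 * 6)) * (X + Z + 1) := by
    exact fin_b1 hMS hM0.le hX0.le hZ.le
  have b2 : M * S * 2 + M * (1 * (1 / t₀)) ≤ (M * S * 2 + M * (1 / t₀)) * (X + Z + 1) := by
    exact fin_b2 hMS hMt hX0.le hZ.le
  calc _ = ‖coefD k t‖ * ‖(c1 : ℂ) * Y1 - (c2 : ℂ) * Y2‖ := by
        rw [norm_mul, norm_mul, hEn, one_mul]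
    _ ≤ K * ((M * S * 2 + M * (2 * 6)) * (X + Z + 1) +
        (M * S * 2 + M * (1 / t₀)) * (X + Z + 1)) := by
        gcongr
        exact (norm_sub_le _ _).trans (add_le_add (y1.trans b1) (y2.trans b2))
    _ = _ := by ring
end

section
/- There exists an absolute constant C such that for every half-integer K ≥ 5/2 (K ∈ ℤ + 1/2), every real n ≥ 1, and every x > 0, the derivative with respect to x of the function x ↦ x^{−1/2} · J_{K−1}(4πn/x) satisfies | d/dx ( x^{−1/2} J_{K−1}(4πn/x) ) | ≤ C·( n^{−1/3} x^{−7/6} + n^{2/3} x^{−13/6} ). -/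
open Real MeasureTheory


noncomputable def cc (m j : ℕ) : ℝ := (-1)^j / ((j.factorial : ℝ) * 2^j * ((2*j+2*m+1).doubleFactorial : ℝ))
noncomputable def gg (m : ℕ) (z : ℝ) : ℝ := ∑' j : ℕ, cc m j * z^j

lemma df_succ (m j : ℕ) : ((2*(j+1)+2*m+1).doubleFactorial : ℝ) = (2*j+2*m+3) * ((2*j+2*m+1).doubleFactorial : ℝ) := by
  have : 2*(j+1)+2*m+1 = (2*j+2*m+1)+2 := by ring
  rw [this, Nat.doubleFactorial_add_two]; push_cast; ring
lemma df_pos (n : ℕ) : (0:ℝ) < (n.doubleFactorial : ℝ) := by exact_mod_cast Nat.doubleFactorial_pos n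

lemma cc_abs (m j : ℕ) : |cc m j| ≤ 1 / (j.factorial : ℝ) := by
  unfold cc
  rw [abs_div, abs_pow, abs_neg, abs_one, one_pow]
  have h1 : (1:ℝ) ≤ j.factorial := by exact_mod_cast Nat.factorial_pos j
  have h2 : (1:ℝ) ≤ 2^j := one_le_pow₀ (by norm_num)
  have h3 : (1:ℝ) ≤ ((2*j+2*m+1).doubleFactorial : ℝ) := by exact_mod_cast Nat.doubleFactorial_pos _
  rw [abs_of_pos (by positivity)]
  apply one_div_le_one_div_of_le (by positivity)
  rw [mul_assoc]
  exact le_mul_of_one_le_right (by positivity) (one_le_mul_of_one_le_of_one_le h2 h3)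

lemma cc_summable (m : ℕ) (z : ℝ) : Summable (fun j => cc m j * z^j) := by
  apply Summable.of_norm_bounded (Real.summable_pow_div_factorial |z|)
  intro j
  rw [norm_mul, norm_pow, Real.norm_eq_abs, Real.norm_eq_abs, div_eq_mul_one_div, mul_comm]
  exact mul_le_mul_of_nonneg_left (cc_abs m j) (by positivity)

lemma cc_shift (m j : ℕ) : cc m (j+1) * (j+1) = -(1/2) * cc (m+1) j := by
  unfold cc
  have e : 2*j+2*(m+1)+1 = 2*(j+1)+2*m+1 := by ring
  rw [e, Nat.factorial_succ]
  have := df_pos (2*(j+1)+2*m+1)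
  push_cast
  field_simp
  ring

lemma gg_deriv (m : ℕ) (z : ℝ) : HasDerivAt (gg m) (-(1/2) * gg (m+1) z) z := by
  have key : HasDerivAt (gg m) (∑' j : ℕ, cc m j * (j * z^(j-1))) z := by
    set R := |z|+1
    have hR : 0 < R := by positivity
    have hu : Summable (fun j : ℕ => (1 / (j.factorial : ℝ)) * (j * R^(j-1))) := by
      rw [← summable_nat_add_iff 1]
      refine (Real.summable_pow_div_factorial R).congr ?_
      intro j
      simp only [Nat.factorial_succ, Nat.add_sub_cancel]
      have : (j.factorial : ℝ) ≠ 0 := by positivity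
      push_cast
      field_simp
    refine hasDerivAt_tsum_of_isPreconnected (t := Metric.ball 0 R) (y₀ := 0) hu Metric.isOpen_ball
      (convex_ball 0 R).isPreconnected (fun j y _ => (hasDerivAt_pow j y).const_mul (cc m j)) ?_ (by simpa using hR)
      (cc_summable m 0) (by simp [R])
    intro j y hy
    have hy : |y| ≤ R := by
      have := mem_ball_zero_iff.1 hy
      simpa using this.le
    rw [norm_mul, norm_mul, norm_pow, Real.norm_eq_abs, Real.norm_eq_abs, Real.norm_eq_abs, Nat.abs_cast]
    gcongr
    exact cc_abs m j
  convert key using 1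
  have hs : Summable (fun j : ℕ => cc m j * (j * z^(j-1))) := by
    rw [← summable_nat_add_iff 1]
    refine ((cc_summable (m+1) z).mul_left (-(1/2))).congr fun j => ?_
    have := cc_shift m j
    push_cast
    rw [← mul_assoc, ← mul_assoc, ← this]
  rw [hs.tsum_eq_zero_add, gg, ← tsum_mul_left]
  simp only [Nat.cast_zero, zero_mul, mul_zero, zero_add]
  congr 1; ext j
  have := cc_shift m j
  push_cast
  rw [← mul_assoc, ← mul_assoc, ← this]

lemma gg_three (m : ℕ) (z : ℝ) : (2*m+3) * gg (m+1) z = gg m z + z * gg (m+2) z := by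
  unfold gg
  rw [(cc_summable (m+1) z).tsum_eq_zero_add, (cc_summable m z).tsum_eq_zero_add, mul_add,
    ← tsum_mul_left, ← tsum_mul_left, add_assoc, ← Summable.tsum_add]
  · congr 1
    · unfold cc
      have := df_succ m 0
      have := df_pos (2*0+2*m+1)
      have e : 2*0+2*(m+1)+1 = 2*(0+1)+2*m+1 := by ring
      rw [e, df_succ]
      push_cast
      have : (2*(m:ℝ)+3) ≠ 0 := by positivity
      simp
      field_simp
    · congr 1; ext j
      unfold cc
      have e : 2*(j+1)+2*(m+1)+1 = 2*(j+1+1)+2*m+1 := by ring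
      have e' : 2*j+2*(m+2)+1 = 2*(j+1+1)+2*m+1 := by ring
      rw [e, e', df_succ m (j+1), Nat.factorial_succ]
      have := df_pos (2*(j+1)+2*m+1)
      push_cast
      have : (2*((j:ℝ)+1)+2*(m:ℝ)+3) ≠ 0 := by positivity
      field_simp
      ring
  · exact (summable_nat_add_iff 1).2 (cc_summable m z)
  · exact (cc_summable _ z).mul_left z

noncomputable def ww (m : ℕ) (u : ℝ) : ℝ := u^(m+1) * gg m (u^2)
noncomputable def dd (m : ℕ) (u : ℝ) : ℝ := (m+1) * u^m * gg m (u^2) - u^(m+2) * gg (m+1) (u^2)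

lemma gg_sq_deriv (m : ℕ) (u : ℝ) : HasDerivAt (fun u => gg m (u^2)) (- u * gg (m+1) (u^2)) u := by
  have := (gg_deriv m (u^2)).comp u (hasDerivAt_pow 2 u)
  refine this.congr_deriv ?_
  push_cast; ring

lemma ww_deriv (m : ℕ) (u : ℝ) : HasDerivAt (ww m) (dd m u) u := by
  have := (hasDerivAt_pow (m+1) u).mul (gg_sq_deriv m u)
  refine this.congr_deriv ?_
  unfold dd
  push_cast; ring

lemma dd_deriv (m : ℕ) (u : ℝ) (hu : u ≠ 0) :
    HasDerivAt (dd m) ((m*(m+1)/u^2 - 1) * ww m u) u := by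
  have := (((hasDerivAt_pow m u).const_mul ((m:ℝ)+1)).mul (gg_sq_deriv m u)).sub
    ((hasDerivAt_pow (m+2) u).mul (gg_sq_deriv (m+1) u))
  refine this.congr_deriv ?_
  unfold ww
  have h3 := gg_three m (u^2)
  have e : gg (m+1+1) (u^2) = ((2*m+3) * gg (m+1) (u^2) - gg m (u^2))/u^2 := by
    field_simp; linarith [h3]
  rw [e]
  rcases m with _ | m
  · push_cast; simp; field_simp; ring
  · push_cast; field_simp; ring

lemma ww_succ (m : ℕ) (u : ℝ) (hu : u ≠ 0) : ww (m+1) u = (m+1) * u⁻¹ * ww m u - dd m u := by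
  unfold ww dd; field_simp; ring

lemma dd_succ (m : ℕ) (u : ℝ) (hu : u ≠ 0) : dd (m+1) u = ww m u - (m+1) * u⁻¹ * ww (m+1) u := by
  unfold ww dd
  have h3 := gg_three m (u^2)
  have e : gg (m+1+1) (u^2) = ((2*m+3) * gg (m+1) (u^2) - gg m (u^2))/u^2 := by
    field_simp; linarith [h3]
  rw [e]; push_cast; field_simp; ring

lemma dd_cont (m : ℕ) : Continuous (dd m) := by
  have h : ∀ m, Continuous (fun u : ℝ => gg m (u^2)) := fun m =>
    continuous_iff_continuousAt.2 fun u => (gg_sq_deriv m u).continuousAt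
  have := h m
  have := h (m+1)
  unfold dd; fun_prop
lemma ww_cont (m : ℕ) : Continuous (ww m) :=
    continuous_iff_continuousAt.2 fun u => (ww_deriv m u).continuousAt

noncomputable def HH (m : ℕ) (u : ℝ) : ℝ := dd m u^2 + (1 - m*(m+1)/u^2) * ww m u^2

lemma HH_deriv (m : ℕ) (u : ℝ) (hu : u ≠ 0) : HasDerivAt (HH m) (2*m*(m+1)/u^3 * ww m u^2) u := by
  have h1 := ((hasDerivAt_pow 2 u).inv (pow_ne_zero 2 hu)).const_mul ((m:ℝ)*(m+1))
  have := ((dd_deriv m u hu).pow 2).add (((hasDerivAt_const u (1:ℝ)).sub h1).mul ((ww_deriv m u).pow 2))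
  refine this.congr_deriv ?_
  simp; field_simp; ring

lemma HH_mono (m : ℕ) : MonotoneOn (HH m) (Set.Ioi 0) := by
  apply monotoneOn_of_deriv_nonneg (convex_Ioi 0)
  · exact fun u hu => (HH_deriv m u (ne_of_gt hu)).continuousAt.continuousWithinAt
  · rw [interior_Ioi]
    exact fun u hu => (HH_deriv m u (ne_of_gt hu)).differentiableAt.differentiableWithinAt
  · rw [interior_Ioi]
    intro u hu
    have hu : 0 < u := hu
    rw [(HH_deriv m u (ne_of_gt hu)).deriv]; positivity

lemma zero_const (u : ℝ) (hu : 0 < u) : ww 0 u^2 + dd 0 u^2 = 1 := by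
  set f : ℝ → ℝ := fun u => ww 0 u^2 + dd 0 u^2 with hf
  have hd : ∀ v, v ≠ 0 → HasDerivAt f 0 v := by
    intro v hv
    refine (((ww_deriv 0 v).pow 2).add ((dd_deriv 0 v hv).pow 2)).congr_deriv ?_
    push_cast; simp; ring
  have hc : ContinuousOn f (Set.Icc 0 u) :=
    (((ww_cont 0).pow 2).add ((dd_cont 0).pow 2)).continuousOn
  have hdiff : DifferentiableOn ℝ f (interior (Set.Icc 0 u)) := by
    rw [interior_Icc]
    exact fun v hv => (hd v hv.1.ne').differentiableAt.differentiableWithinAt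
  have hder : ∀ v ∈ interior (Set.Icc 0 u), deriv f v = 0 := by
    rw [interior_Icc]
    exact fun v hv => (hd v hv.1.ne').deriv
  have m1 := monotoneOn_of_deriv_nonneg (convex_Icc 0 u) hc hdiff (fun v hv => (hder v hv).ge)
  have m2 := antitoneOn_of_deriv_nonpos (convex_Icc 0 u) hc hdiff (fun v hv => (hder v hv).le)
  have h0 : (0:ℝ) ∈ Set.Icc 0 u := ⟨le_rfl, hu.le⟩
  have hu' : u ∈ Set.Icc 0 u := ⟨hu.le, le_rfl⟩
  have e : f u = f 0 := le_antisymm (m2 h0 hu' hu.le) (m1 h0 hu' hu.le)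
  have g0 : gg 0 0 = 1 := by
    unfold gg
    rw [tsum_eq_single 0]
    · simp [cc]
    · intro j hj; simp [hj]
  have e0 : f 0 = 1 := by simp [hf, ww, dd, g0]
  exact e.trans e0

open Filter Topology in
lemma lim_one (m : ℕ) : Tendsto (fun u => ww m u^2 + dd m u^2) atTop (𝓝 1) := by
  induction m with
  | zero =>
    refine tendsto_const_nhds.congr' ?_
    filter_upwards [eventually_gt_atTop 0] with u hu
    rw [zero_const u hu]
  | succ m ih =>
    set c : ℝ := m+1 with hc
    have hr : Tendsto (fun u : ℝ => u⁻¹) atTop (𝓝 0) := tendsto_inv_atTop_zero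
    have hlim : Tendsto (fun u : ℝ => (c^2*(u⁻¹)^2 + 2*c^4*(u⁻¹)^4 + 2*c^3*|u⁻¹|^3) * (ww m u^2 + dd m u^2)) atTop (𝓝 0) := by
      have : Tendsto (fun u : ℝ => c^2*(u⁻¹)^2 + 2*c^4*(u⁻¹)^4+ 2*c^3*|u⁻¹|^3) atTop (𝓝 (c^2*0^2+2*c^4*0^4+ 2*c^3*|(0:ℝ)|^3)) :=
        (((hr.pow 2).const_mul _).add ((hr.pow 4).const_mul _)).add ((hr.abs.pow 3).const_mul _)
      simpa using this.mul ih
    have hz : Tendsto (fun u => (ww (m+1) u^2 + dd (m+1) u^2) - (ww m u^2 + dd m u^2)) atTop (𝓝 0) := by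
      apply squeeze_zero_norm' _ hlim
      filter_upwards [eventually_gt_atTop 0] with u hu
      rw [dd_succ m u hu.ne', ww_succ m u hu.ne', ← hc, Real.norm_eq_abs]
      have hr : 0 < u⁻¹ := by positivity
      rw [abs_of_pos hr]
      have hcp : 0 < c := by positivity
      generalize ww m u = w
      generalize dd m u = d
      have hq : 0 < c * u⁻¹ := by positivity
      rw [show c^2*(u⁻¹)^2 + 2*c^4*(u⁻¹)^4+ 2*c^3*(u⁻¹)^3 = (c*u⁻¹)^2+2*(c*u⁻¹)^4+2*(c*u⁻¹)^3 by ring]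
      generalize c * u⁻¹ = q at *
      have e : (q*w-d)^2 + (w - q*(q*w-d))^2 - (w^2+d^2) = q^2*(d^2-w^2) + q^4*w^2 - 2*q^3*(w*d) := by ring
      rw [e, abs_le]
      have h1 : 0 ≤ q^2*w^2 := by positivity
      have h2 : 0 ≤ q^2*d^2 := by positivity
      have h3 : 0 ≤ q^4*w^2 := by positivity
      have h4 : 0 ≤ q^4*d^2 := by positivity
      have h5 : 0 ≤ q^3*(w+d)^2 := by positivity
      have h6 : 0 ≤ q^3*(w-d)^2 := by positivity
      have h7 : 0 ≤ q^3*w^2 := by positivity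
      have h8 : 0 ≤ q^3*d^2 := by positivity
      constructor <;> nlinarith
    simpa using hz.add ih

lemma HH_le_one (m : ℕ) (u : ℝ) (hu : 0 < u) : HH m u ≤ 1 := by
  apply ge_of_tendsto (lim_one m)
  filter_upwards [Filter.eventually_ge_atTop u] with v hv
  refine (HH_mono m hu (hu.trans_le hv) hv).trans ?_
  unfold HH
  have : 0 ≤ (m:ℝ)*(m+1)/v^2 * ww m v^2 := by positivity
  linarith

lemma dd_sq_le (m : ℕ) (u : ℝ) (hu : 0 < u) : dd m u^2 ≤ 1 := by
  by_cases h : (m:ℝ)*(m+1) ≤ u^2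
  · have h1 := HH_le_one m u hu
    unfold HH at h1
    have : (m:ℝ)*(m+1)/u^2 ≤ 1 := (div_le_one (by positivity)).2 h
    have : 0 ≤ (1 - (m:ℝ)*(m+1)/u^2) * ww m u^2 := mul_nonneg (by linarith) (by positivity)
    linarith
  · push Not at h
    set s := √((m:ℝ)*(m+1)) with hs
    have hs2 : s^2 = m*(m+1) := Real.sq_sqrt (by positivity)
    have hus : u < s := Real.lt_sqrt_of_sq_lt h
    have hQ : ∀ v ∈ Set.Ioo 0 s, 0 ≤ (m:ℝ)*(m+1)/v^2 - 1 := by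
      intro v hv
      have hv0 := hv.1
      rw [sub_nonneg, one_le_div (by positivity), ← hs2]
      exact pow_le_pow_left₀ hv.1.le hv.2.le 2
    have hwd : ∀ v, v ≠ 0 → HasDerivAt (fun v => ww m v * dd m v)
        (dd m v * dd m v + ww m v * ((m*(m+1)/v^2 - 1) * ww m v)) v := fun v hv =>
      (ww_deriv m v).mul (dd_deriv m v hv)
    have mono1 : MonotoneOn (fun v => ww m v * dd m v) (Set.Icc 0 s) := by
      apply monotoneOn_of_deriv_nonneg (convex_Icc 0 s)
      · exact ((ww_cont m).mul (dd_cont m)).continuousOn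
      · rw [interior_Icc]
        exact fun v hv => (hwd v hv.1.ne').differentiableAt.differentiableWithinAt
      · rw [interior_Icc]
        intro v hv
        rw [(hwd v hv.1.ne').deriv]
        nlinarith [mul_nonneg (hQ v hv) (sq_nonneg (ww m v)), sq_nonneg (dd m v)]
    have pos : ∀ v ∈ Set.Icc 0 s, 0 ≤ ww m v * dd m v := by
      intro v hv
      have := mono1 (Set.left_mem_Icc.2 (hv.1.trans hv.2)) hv hv.1
      simpa [ww] using this
    have hdd : ∀ v, v ≠ 0 → HasDerivAt (fun v => dd m v ^ 2)
        (2 * dd m v * ((m*(m+1)/v^2 - 1) * ww m v)) v := fun v hv => by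
      exact ((dd_deriv m v hv).pow 2).congr_deriv (by simp)
    have mono2 : MonotoneOn (fun v => dd m v^2) (Set.Icc 0 s) := by
      apply monotoneOn_of_deriv_nonneg (convex_Icc 0 s)
      · exact ((dd_cont m).pow 2).continuousOn
      · rw [interior_Icc]
        exact fun v hv => (hdd v hv.1.ne').differentiableAt.differentiableWithinAt
      · rw [interior_Icc]
        intro v hv
        rw [(hdd v hv.1.ne').deriv]
        have := mul_nonneg (hQ v hv) (pos v ⟨hv.1.le, hv.2.le⟩)
        linarith
    refine (mono2 ⟨hu.le, hus.le⟩ ⟨(hu.trans hus).le, le_rfl⟩ hus.le).trans ?_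
    have h1 := HH_le_one m s (hu.trans hus)
    unfold HH at h1
    rw [hs2, div_self (by rw [← hs2]; have := hu.trans hus; positivity)] at h1
    simpa using h1

lemma bessel_eq (m : ℕ) (u : ℝ) (hu : 0 < u) :
    besselJ ((m : ℂ) + 1 / 2) u = ((√(2 / π) * (√u)⁻¹ * ww m u : ℝ) : ℂ) := by
  unfold besselJ ww gg
  rw [← tsum_mul_left, ← tsum_mul_left, Complex.ofReal_tsum]
  congr 1; ext j
  have hG : Complex.Gamma ((j:ℂ) + 1 + ((m:ℂ) + 1/2))
      = (((2*j+2*m+1).doubleFactorial * √π / 2 ^ (j+m+1) : ℝ) : ℂ) := by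
    have h := Real.Gamma_nat_add_half (j+m+1)
    rw [show 2*(j+m+1)-1 = 2*j+2*m+1 by omega] at h
    rw [← h, ← Complex.Gamma_ofReal]
    congr 1; push_cast; ring
  have hE : Complex.exp ((2 * (j:ℂ) + ((m:ℂ)+1/2)) * (Real.log (u/2) : ℂ))
      = (((u/2)^(2*j+m) * √(u/2) : ℝ) : ℂ) := by
    have : (u/2)^(2*j+m) * √(u/2) = Real.exp ((2*j+(m+1/2)) * Real.log (u/2)) := by
      rw [Real.sqrt_eq_rpow, ← Real.rpow_natCast, ← Real.rpow_add (by positivity),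
        Real.rpow_def_of_pos (by positivity)]
      congr 1; push_cast; ring
    rw [this]; push_cast; rfl
  rw [hG, hE]
  have hreal : ((-1:ℝ)^j / ((Nat.factorial j : ℝ) * ((2*j+2*m+1).doubleFactorial * √π / 2 ^ (j+m+1))))
      * ((u/2)^(2*j+m) * √(u/2)) = √(2 / π) * (√u)⁻¹ * (u^(m+1) * (cc m j * (u^2)^j)) := by
    unfold cc
    have := df_pos (2*j+2*m+1)
    have hp : 0 < √π := Real.sqrt_pos.2 Real.pi_pos
    have hsu : 0 < √u := Real.sqrt_pos.2 hu
    have hs2 : 0 < √(2:ℝ) := Real.sqrt_pos.2 (by norm_num)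
    rw [div_pow, Real.sqrt_div hu.le, Real.sqrt_div (by norm_num : (0:ℝ) ≤ 2)]
    have h2 : √(2:ℝ)^2 = 2 := Real.sq_sqrt (by norm_num)
    have h3 : √u^2 = u := Real.sq_sqrt hu.le
    field_simp
    rw [h2, h3]
    ring
  rw [← hreal]; push_cast; rfl

theorem stmt10 :
    ∃ C : ℝ, ∀ K n x : ℝ, (∃ j : ℤ, K = (j : ℝ) + 1 / 2) → 5 / 2 ≤ K →
      1 ≤ n → 0 < x →
      ‖deriv (fun y : ℝ =>
          Complex.ofReal (y ^ (-(1 : ℝ) / 2)) * besselJ ((K : ℂ) - 1) (4 * π * n / y)) x‖ ≤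
        C * (n ^ (-(1 : ℝ) / 3) * x ^ (-(7 : ℝ) / 6) + n ^ ((2 : ℝ) / 3) * x ^ (-(13 : ℝ) / 6)) := by
  refine ⟨√8, ?_⟩
  rintro K n x ⟨j, hj⟩ hK hn hx
  have hn0 : 0 < n := by linarith
  have hj2 : (2:ℤ) ≤ j := by
    have : (2:ℝ) ≤ j := by linarith
    exact_mod_cast this
  obtain ⟨m, hm⟩ : ∃ m : ℕ, j = m + 1 := ⟨(j-1).toNat, by omega⟩
  have hν : (K:ℂ) - 1 = (m:ℂ) + 1/2 := by
    rw [hj, hm]; push_cast; ring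
  rw [hν]
  set a := 4 * π * n with ha
  have ha0 : 0 < a := by positivity
  have heq : (fun y : ℝ => Complex.ofReal (y ^ (-(1 : ℝ) / 2)) * besselJ ((m:ℂ) + 1/2) (a / y))
      =ᶠ[nhds x] fun y => ((√(2/π) * (√a)⁻¹ * ww m (a / y) : ℝ) : ℂ) := by
    filter_upwards [lt_mem_nhds hx] with y hy
    rw [bessel_eq m _ (by positivity), ← Complex.ofReal_mul]
    congr 1
    rw [neg_div, Real.rpow_neg hy.le, ← Real.sqrt_eq_rpow, Real.sqrt_div ha0.le]
    have : 0 < √y := Real.sqrt_pos.2 hy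
    have : 0 < √a := Real.sqrt_pos.2 ha0
    field_simp
  have hder : HasDerivAt (fun y : ℝ => √(2/π) * (√a)⁻¹ * ww m (a / y))
      (√(2/π) * (√a)⁻¹ * (dd m (a/x) * (-a / x^2))) x := by
    have h1 : HasDerivAt (fun y : ℝ => a / y) (-a / x^2) x := by
      have := (hasDerivAt_inv hx.ne').const_mul a
      refine this.congr_deriv ?_
      field_simp
    exact ((ww_deriv m (a/x)).comp x h1).const_mul _
  rw [heq.deriv_eq, hder.ofReal_comp.deriv, Complex.norm_real, Real.norm_eq_abs]
  have hd : |dd m (a/x)| ≤ 1 := (sq_le_one_iff_abs_le_one _).1 (dd_sq_le m _ (by positivity))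
  have hsa : 0 < √a := Real.sqrt_pos.2 ha0
  have h2 : |√(2/π) * (√a)⁻¹ * (dd m (a/x) * (-a / x^2))| ≤ √8 * (√n / x^2) := by
    have e1 : √(2/π) * √a = √8 * √n := by
      rw [← Real.sqrt_mul (by positivity), ← Real.sqrt_mul (by positivity)]
      congr 1; rw [ha]; field_simp; ring
    have e2 : √(2/π) * (√a)⁻¹ * (dd m (a/x) * (-a / x^2)) = -(√(2/π) * √a) / x^2 * dd m (a/x) := by
      have := Real.sq_sqrt ha0.le
      field_simp
      rw [this]
    rw [e2, e1, abs_mul, abs_div, abs_neg, abs_of_nonneg (by positivity : 0 ≤ √8 * √n),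
      abs_of_pos (by positivity : 0 < x^2)]
    calc √8 * √n / x^2 * |dd m (a/x)| ≤ √8 * √n / x^2 * 1 := by gcongr
      _ = _ := by ring
  refine h2.trans ?_
  gcongr
  have hs : √n / x^2 = n^((1:ℝ)/2) * x^(-(2:ℝ)) := by
    rw [Real.sqrt_eq_rpow, Real.rpow_neg hx.le, div_eq_mul_inv]; norm_cast
  rw [hs]
  rcases le_total n x with h | h
  · have : n^((1:ℝ)/2) * x^(-(2:ℝ)) ≤ n ^ (-(1 : ℝ) / 3) * x ^ (-(7 : ℝ) / 6) := by
      have e1 : n^((1:ℝ)/2) = n ^ (-(1 : ℝ) / 3) * n^((5:ℝ)/6) := by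
        rw [← Real.rpow_add hn0]; norm_num
      have e2 : x ^ (-(7 : ℝ) / 6) = x^((5:ℝ)/6) * x^(-(2:ℝ)) := by
        rw [← Real.rpow_add hx]; norm_num
      rw [e1, e2, mul_assoc]
      gcongr
    have : 0 ≤ n ^ ((2 : ℝ) / 3) * x ^ (-(13 : ℝ) / 6) := by positivity
    linarith
  · have : n^((1:ℝ)/2) * x^(-(2:ℝ)) ≤ n ^ ((2 : ℝ) / 3) * x ^ (-(13 : ℝ) / 6) := by
      have e1 : n^((2:ℝ)/3) = n ^ ((1 : ℝ) / 2) * n^((1:ℝ)/6) := by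
        rw [← Real.rpow_add hn0]; norm_num
      have e2 : x ^ (-(2 : ℝ)) = x^((1:ℝ)/6) * x^(-(13:ℝ)/6) := by
        rw [← Real.rpow_add hx]; norm_num
      rw [e1, e2, mul_assoc]
      gcongr
    have : 0 ≤ n ^ (-(1 : ℝ) / 3) * x ^ (-(7 : ℝ) / 6) := by positivity
    linarith
end
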